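/- Let d ↦ n(d) be a function with n(d) → ∞ and d/n(d) → 0 as d → ∞. For each d, let X_1, …, X_{n(d)} be i.i.d. d-dimensional standard normal random vectors N_d(0, I). Let S_d be the sample covariance matrix, T_d Tyler's M-estimator of the sample, S*_d = √(n(d)/d)(S_d − I) and T*_d = √(n(d)/d)(T_d − I). Then for every fixed integer m ≥ 1, the random variable |(1/d)·tr((T*_d)^m) − (1/d)·tr((S*_d)^m)| converges in probability to 0 as d → ∞. -/

import Mathlib

open MeasureTheory ProbabilityTheory Filter Matrix

/-- The eigenvalues of a real symmetric `d × d` matrix, sorted in increasing order,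
so that `sortedEigs A i` is `λ_{i+1}(A)` with `λ_1(A) ≤ … ≤ λ_d(A)`
(junk value `0` if the matrix is not symmetric). -/
noncomputable def sortedEigs {d : ℕ} (A : Matrix (Fin d) (Fin d) ℝ) : Fin d → ℝ :=
  if h : A.IsHermitian then h.eigenvalues ∘ Tuple.sort h.eigenvalues else 0

/-- The spectral norm `‖A‖₂ = max (|λ_1(A)|, |λ_d(A)|)` of a symmetric matrix,
i.e. the largest absolute value of an eigenvalue. -/
noncomputable def specNorm {d : ℕ} (A : Matrix (Fin d) (Fin d) ℝ) : ℝ :=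
  ⨆ i : Fin d, |sortedEigs A i|

/-- `IsTyler X T` says that `T` is Tyler's M-estimator of the sample
`X : Fin n → (Fin d → ℝ)`: it is symmetric positive definite, normalized by
`tr T = d`, and satisfies Tyler's fixed-point equation
`T = (d/n) ∑_j (X_j X_jᵗ) / (X_jᵗ T⁻¹ X_j)`. -/
def IsTyler {d n : ℕ} (X : Fin n → Fin d → ℝ) (T : Matrix (Fin d) (Fin d) ℝ) : Prop :=
  T.PosDef ∧ T.trace = d ∧
    T = ((d : ℝ) / (n : ℝ)) •
      ∑ j : Fin n, (X j ⬝ᵥ T⁻¹ *ᵥ X j)⁻¹ • vecMulVec (X j) (X j)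

section
/-- squared Frobenius norm -/
def fsq {d : ℕ} (A : Matrix (Fin d) (Fin d) ℝ) : ℝ := ∑ i, ∑ j, A i j ^ 2
/-- Frobenius inner product -/
def fip {d : ℕ} (A B : Matrix (Fin d) (Fin d) ℝ) : ℝ := ∑ i, ∑ j, A i j * B i j
/-- quadratic form bound -/
def QB {d : ℕ} (A : Matrix (Fin d) (Fin d) ℝ) (t : ℝ) : Prop :=
  ∀ v : Fin d → ℝ, |v ⬝ᵥ A *ᵥ v| ≤ t * (v ⬝ᵥ v)

variable {d : ℕ}

lemma fsq_nonneg (A : Matrix (Fin d) (Fin d) ℝ) : 0 ≤ fsq A := by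
  unfold fsq; positivity

lemma fsq_eq_fip (A : Matrix (Fin d) (Fin d) ℝ) : fsq A = fip A A := by
  unfold fsq fip; simp only [sq]

lemma fip_sq_le (A B : Matrix (Fin d) (Fin d) ℝ) : fip A B ^ 2 ≤ fsq A * fsq B := by
  unfold fsq fip
  simp only [← Finset.sum_product']
  exact Finset.sum_mul_sq_le_sq_mul_sq _ _ _

lemma fip_add_right (A B C : Matrix (Fin d) (Fin d) ℝ) : fip A (B + C) = fip A B + fip A C := by
  simp [fip, mul_add, Finset.sum_add_distrib]
lemma fip_sub_right (A B C : Matrix (Fin d) (Fin d) ℝ) : fip A (B - C) = fip A B - fip A C := by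
  simp [fip, mul_sub, Finset.sum_sub_distrib]
lemma fip_neg_right (A B : Matrix (Fin d) (Fin d) ℝ) : fip A (-B) = - fip A B := by
  simp [fip]
lemma fip_smul_right (A B : Matrix (Fin d) (Fin d) ℝ) (r : ℝ) : fip A (r • B) = r * fip A B := by
  simp [fip, Finset.mul_sum]; refine Finset.sum_congr rfl fun i _ => Finset.sum_congr rfl fun j _ => by ring
lemma fip_comm (A B : Matrix (Fin d) (Fin d) ℝ) : fip A B = fip B A := by
  simp [fip, mul_comm]
lemma fip_sum_right {n : ℕ} (A : Matrix (Fin d) (Fin d) ℝ) (B : Fin n → Matrix (Fin d) (Fin d) ℝ) :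
    fip A (∑ j, B j) = ∑ j, fip A (B j) := by
  unfold fip
  simp only [Matrix.sum_apply, Finset.mul_sum]
  rw [Finset.sum_comm' (t' := Finset.univ) (s' := fun _ => Finset.univ) (by simp)]
  symm
  rw [Finset.sum_comm]
  symm
  rw [Finset.sum_comm]
  refine Finset.sum_congr rfl fun i _ => ?_
  rw [Finset.sum_comm]
lemma fip_vec (A : Matrix (Fin d) (Fin d) ℝ) (u : Fin d → ℝ) :
    fip A (vecMulVec u u) = u ⬝ᵥ A *ᵥ u := by
  simp only [fip, vecMulVec_apply, dotProduct, mulVec, Finset.mul_sum]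
  refine Finset.sum_congr rfl fun i _ => Finset.sum_congr rfl fun j _ => by ring

lemma fsq_add_le (A B : Matrix (Fin d) (Fin d) ℝ) : fsq (A + B) ≤ 2 * fsq A + 2 * fsq B := by
  unfold fsq
  rw [Finset.mul_sum, Finset.mul_sum, ← Finset.sum_add_distrib]
  refine Finset.sum_le_sum fun i _ => ?_
  rw [Finset.mul_sum, Finset.mul_sum, ← Finset.sum_add_distrib]
  refine Finset.sum_le_sum fun j _ => ?_
  simp only [Matrix.add_apply]
  nlinarith [sq_nonneg (A i j - B i j)]
lemma fsq_neg (A : Matrix (Fin d) (Fin d) ℝ) : fsq (-A) = fsq A := by simp [fsq]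
lemma fsq_smul (A : Matrix (Fin d) (Fin d) ℝ) (r : ℝ) : fsq (r • A) = r ^ 2 * fsq A := by
  simp [fsq, Finset.mul_sum, mul_pow]
lemma fsq_transpose (A : Matrix (Fin d) (Fin d) ℝ) : fsq Aᵀ = fsq A := by
  unfold fsq; rw [Finset.sum_comm]; rfl

lemma dot_self_eq (v : Fin d → ℝ) : v ⬝ᵥ v = ∑ i, v i ^ 2 := by simp [dotProduct, sq]
lemma dot_self_nonneg (v : Fin d → ℝ) : 0 ≤ v ⬝ᵥ v := by rw [dot_self_eq]; positivity

lemma symm_dot (A : Matrix (Fin d) (Fin d) ℝ) (hA : A.IsHermitian) (x y : Fin d → ℝ) :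
    x ⬝ᵥ A *ᵥ y = y ⬝ᵥ A *ᵥ x := by
  have : Aᵀ = A := by simpa [Matrix.IsHermitian] using hA
  rw [Matrix.dotProduct_mulVec, ← Matrix.mulVec_transpose, this, dotProduct_comm]

lemma QB_nonneg {A : Matrix (Fin d) (Fin d) ℝ} {t : ℝ} (h : QB A t) (v : Fin d → ℝ) :
    0 ≤ t * (v ⬝ᵥ v) := (abs_nonneg _).trans (h v)

lemma QB_mulVec {A : Matrix (Fin d) (Fin d) ℝ} (hA : A.IsHermitian) {t : ℝ} (ht : 0 < t)
    (h : QB A t) (y : Fin d → ℝ) : (A *ᵥ y) ⬝ᵥ (A *ᵥ y) ≤ t ^ 2 * (y ⬝ᵥ y) := by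
  set w := A *ᵥ y with hw
  set x := t⁻¹ • w with hx
  have h1 := (abs_le.1 (h (x + y))).2
  have h2 := (abs_le.1 (h (x - y))).1
  have e1 : (x + y) ⬝ᵥ A *ᵥ (x + y) - (x - y) ⬝ᵥ A *ᵥ (x - y) = 4 * (x ⬝ᵥ A *ᵥ y) := by
    simp only [mulVec_add, mulVec_sub, dotProduct_add, add_dotProduct, sub_dotProduct, dotProduct_sub]
    rw [symm_dot A hA y x]; ring
  have e2 : (x + y) ⬝ᵥ (x + y) + (x - y) ⬝ᵥ (x - y) = 2 * (x ⬝ᵥ x + y ⬝ᵥ y) := by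
    simp only [dotProduct_add, add_dotProduct, sub_dotProduct, dotProduct_sub]; ring
  have e3 : x ⬝ᵥ A *ᵥ y = t⁻¹ * (w ⬝ᵥ w) := by rw [← hw, hx, smul_dotProduct, smul_eq_mul]
  have e4 : x ⬝ᵥ x = t⁻¹ ^ 2 * (w ⬝ᵥ w) := by
    rw [hx, smul_dotProduct, dotProduct_smul, smul_eq_mul, smul_eq_mul]; ring
  have key : 4 * (t⁻¹ * (w ⬝ᵥ w)) ≤ t * (2 * (t⁻¹ ^ 2 * (w ⬝ᵥ w) + y ⬝ᵥ y)) := by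
    rw [← e3, ← e4, ← e1, ← e2]; linarith
  have : t * (t⁻¹ ^ 2 * (w ⬝ᵥ w)) = t⁻¹ * (w ⬝ᵥ w) := by field_simp
  have k2 : t⁻¹ * (w ⬝ᵥ w) ≤ t * (y ⬝ᵥ y) := by nlinarith
  have := mul_le_mul_of_nonneg_left k2 ht.le
  rw [← mul_assoc, mul_inv_cancel₀ ht.ne', one_mul] at this
  nlinarith

lemma fsq_eq_cols (A : Matrix (Fin d) (Fin d) ℝ) : fsq A = ∑ j, (A.col j ⬝ᵥ A.col j) := by
  unfold fsq; rw [Finset.sum_comm]; simp [dotProduct, sq]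

/-- `A` has operator norm at most `K`. -/
def OB {d : ℕ} (A : Matrix (Fin d) (Fin d) ℝ) (K : ℝ) : Prop :=
  ∀ y, (A *ᵥ y) ⬝ᵥ (A *ᵥ y) ≤ K ^ 2 * (y ⬝ᵥ y)

lemma fsq_mul_le {A : Matrix (Fin d) (Fin d) ℝ} {t : ℝ} (h : OB A t)
    (B : Matrix (Fin d) (Fin d) ℝ) : fsq (A * B) ≤ t ^ 2 * fsq B := by
  rw [fsq_eq_cols, fsq_eq_cols, Finset.mul_sum]
  refine Finset.sum_le_sum fun j _ => ?_
  have : (A * B).col j = A *ᵥ B.col j := by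
    ext i; simp [Matrix.mul_apply, mulVec, dotProduct]
  rw [this]; exact h _

lemma fsq_mul_le' {A : Matrix (Fin d) (Fin d) ℝ} (hA : A.IsHermitian) {t : ℝ} (h : OB A t)
    (B : Matrix (Fin d) (Fin d) ℝ) : fsq (B * A) ≤ t ^ 2 * fsq B := by
  have : Aᵀ = A := by simpa [Matrix.IsHermitian] using hA
  rw [← fsq_transpose, transpose_mul, this, ← fsq_transpose B]
  exact fsq_mul_le h _

lemma fsq_one : fsq (1 : Matrix (Fin d) (Fin d) ℝ) = d := by
  simp [fsq, Matrix.one_apply]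

lemma fsq_le_of_OB {A : Matrix (Fin d) (Fin d) ℝ} {t : ℝ} (h : OB A t) : fsq A ≤ t ^ 2 * d := by
  have := fsq_mul_le h 1
  rwa [mul_one, fsq_one] at this

lemma fsq_le_of_QB {A : Matrix (Fin d) (Fin d) ℝ} (hA : A.IsHermitian) {t : ℝ} (ht : 0 < t)
    (h : QB A t) : fsq A ≤ t ^ 2 * d := fsq_le_of_OB (QB_mulVec hA ht h)

lemma fip_one (A : Matrix (Fin d) (Fin d) ℝ) : fip 1 A = A.trace := by
  simp [fip, Matrix.one_apply, trace]

lemma fip_eq_trace (A B : Matrix (Fin d) (Fin d) ℝ) : fip A B = (Aᵀ * B).trace := by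
  simp only [fip, trace, diag, Matrix.mul_apply, transpose_apply]; rw [Finset.sum_comm]

lemma OB_mul {A B : Matrix (Fin d) (Fin d) ℝ} {s t : ℝ} (h : OB A s) (h' : OB B t) :
    OB (A * B) (s * t) := by
  intro y
  rw [← mulVec_mulVec]
  refine (h _).trans ?_
  rw [mul_pow, mul_assoc]
  exact mul_le_mul_of_nonneg_left (h' y) (sq_nonneg _)
lemma OB_pow {A : Matrix (Fin d) (Fin d) ℝ} {s : ℝ} (h : OB A s) (k : ℕ) : OB (A ^ k) (s ^ k) := by
  induction k with
  | zero => intro y; simp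
  | succ k ih => rw [pow_succ, pow_succ]; exact OB_mul ih h

/-- trace difference -/
lemma trace_pow_sub_le {A B : Matrix (Fin d) (Fin d) ℝ} {K : ℝ} (hK : 0 ≤ K) (hA : OB A K)
    (hB : OB B K) (m : ℕ) :
    |(A ^ m).trace - (B ^ m).trace| ≤ m * K ^ (m - 1) * √(d * fsq (A - B)) := by
  have id1 : A ^ m - B ^ m = ∑ i ∈ Finset.range m, A ^ i * (A - B) * B ^ (m - 1 - i) := by
    induction m with
    | zero => simp
    | succ k ih =>
      rw [Finset.sum_range_succ]
      have : ∑ i ∈ Finset.range k, A ^ i * (A - B) * B ^ (k + 1 - 1 - i) =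
          (∑ i ∈ Finset.range k, A ^ i * (A - B) * B ^ (k - 1 - i)) * B := by
        rw [Finset.sum_mul]
        refine Finset.sum_congr rfl fun i hi => ?_
        rw [mul_assoc _ _ B, ← pow_succ]
        congr 2
        have := Finset.mem_range.1 hi
        omega
      rw [this, ← ih]
      simp only [Nat.add_sub_cancel, Nat.sub_self, pow_zero, mul_one]
      noncomm_ring
  have hb : ∀ i ∈ Finset.range m, |(A ^ i * (A - B) * B ^ (m - 1 - i)).trace| ≤
      K ^ (m - 1) * √(d * fsq (A - B)) := by
    intro i hi
    rw [Matrix.trace_mul_cycle]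
    have hC : OB (B ^ (m - 1 - i) * A ^ i) (K ^ (m - 1)) := by
      have := OB_mul (OB_pow hB (m - 1 - i)) (OB_pow hA i)
      rw [← pow_add] at this
      have hi' := Finset.mem_range.1 hi
      rwa [show m - 1 - i + i = m - 1 by omega] at this
    set C := B ^ (m - 1 - i) * A ^ i
    have h1 : (C * (A - B)).trace = fip 1 (C * (A - B)) := (fip_one _).symm
    rw [h1]
    have h2 := fip_sq_le 1 (C * (A - B))
    have h3 := fsq_mul_le hC (A - B)
    rw [fsq_one] at h2
    have h4 : fip 1 (C * (A - B)) ^ 2 ≤ (K ^ (m - 1) * √(d * fsq (A - B))) ^ 2 := by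
      rw [mul_pow, Real.sq_sqrt (mul_nonneg (Nat.cast_nonneg _) (fsq_nonneg _))]
      have := mul_le_mul_of_nonneg_left h3 (Nat.cast_nonneg (α := ℝ) d)
      nlinarith
    exact abs_le_of_sq_le_sq h4 (by positivity)
  rw [← Matrix.trace_sub, id1, Matrix.trace_sum]
  refine (Finset.abs_sum_le_sum_abs _ _).trans ((Finset.sum_le_sum hb).trans ?_)
  simp [mul_assoc]

end

section
variable {d : ℕ}

lemma trace_basis (e : Fin d → Fin d → ℝ) (he : ∀ i k, e i ⬝ᵥ e k = if i = k then 1 else 0)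
    (B : Matrix (Fin d) (Fin d) ℝ) : B.trace = ∑ i, e i ⬝ᵥ B *ᵥ e i := by
  let E : Matrix (Fin d) (Fin d) ℝ := Matrix.of e
  have h1 : E * Eᵀ = 1 := by
    ext i k
    rw [Matrix.mul_apply, Matrix.one_apply, ← he]; rfl
  have h2 : Eᵀ * E = 1 := mul_eq_one_comm.1 h1
  have h3 : B.trace = (E * B * Eᵀ).trace := by
    rw [Matrix.trace_mul_cycle, h2, one_mul]
  rw [h3, Matrix.trace]
  refine Finset.sum_congr rfl fun i _ => ?_
  rw [Matrix.diag_apply, mul_assoc, Matrix.mul_apply]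
  simp only [dotProduct]
  refine Finset.sum_congr rfl fun k _ => ?_
  congr 1

lemma spectral (A : Matrix (Fin d) (Fin d) ℝ) (hA : A.IsHermitian) :
    ∃ (e : Fin d → Fin d → ℝ) (τ : Fin d → ℝ),
      (∀ i k, e i ⬝ᵥ e k = if i = k then 1 else 0) ∧
      (∀ w w' : Fin d → ℝ, w ⬝ᵥ w' = ∑ i, (e i ⬝ᵥ w) * (e i ⬝ᵥ w')) ∧
      (∀ i, A *ᵥ e i = τ i • e i) ∧
      (∀ w w', w ⬝ᵥ A *ᵥ w' = ∑ i, τ i * ((e i ⬝ᵥ w) * (e i ⬝ᵥ w'))) := by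
  let b := hA.eigenvectorBasis
  let e : Fin d → Fin d → ℝ := fun i => (b i).ofLp
  have hin : ∀ x y : EuclideanSpace ℝ (Fin d), inner ℝ x y = x.ofLp ⬝ᵥ y.ofLp := by
    intro x y
    simp [PiLp.inner_apply, dotProduct, mul_comm]
  have h1 : ∀ i k, e i ⬝ᵥ e k = if i = k then 1 else 0 := by
    intro i k
    rw [← hin]
    exact orthonormal_iff_ite.1 b.orthonormal i k
  have h2 : ∀ w w' : Fin d → ℝ, w ⬝ᵥ w' = ∑ i, (e i ⬝ᵥ w) * (e i ⬝ᵥ w') := by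
    intro w w'
    have := b.sum_inner_mul_inner (WithLp.toLp 2 w) (WithLp.toLp 2 w')
    rw [hin] at this
    rw [show w ⬝ᵥ w' = (WithLp.toLp 2 w).ofLp ⬝ᵥ (WithLp.toLp 2 w').ofLp from rfl, ← this]
    refine Finset.sum_congr rfl fun i _ => ?_
    rw [hin, hin, dotProduct_comm]
  have h3 : ∀ i, A *ᵥ e i = hA.eigenvalues i • e i := fun i => hA.mulVec_eigenvectorBasis i
  refine ⟨e, hA.eigenvalues, h1, h2, h3, ?_⟩
  intro w w'
  rw [h2]
  refine Finset.sum_congr rfl fun i _ => ?_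
  rw [symm_dot A hA (e i) w', h3, dotProduct_smul, smul_eq_mul, dotProduct_comm w' (e i)]; ring

/-- Fourth order lower bound on PSD forms -/
lemma psd_lower {n : ℕ} {c : ℝ} (u : Fin n → Fin d → ℝ)
    (hb : ∀ v w : Fin d → ℝ, c * (v ⬝ᵥ v) * (w ⬝ᵥ w) ≤
      (d : ℝ) ^ 2 / n * ∑ j, (u j ⬝ᵥ v) ^ 2 * (u j ⬝ᵥ w) ^ 2)
    (B : Matrix (Fin d) (Fin d) ℝ) (hB : B.PosSemidef) (v : Fin d → ℝ) :
    c * (v ⬝ᵥ v) * B.trace ≤ (d : ℝ) ^ 2 / n * ∑ j, (u j ⬝ᵥ v) ^ 2 * (u j ⬝ᵥ B *ᵥ u j) := by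
  obtain ⟨e, τ, h1, h2, h3, h4⟩ := spectral B hB.isHermitian
  have hτ : ∀ i, 0 ≤ τ i := by
    intro i
    have := hB.dotProduct_mulVec_nonneg (e i)
    simpa [h3, h1] using this
  have ht : B.trace = ∑ i, τ i := by
    rw [trace_basis e h1]
    refine Finset.sum_congr rfl fun i _ => ?_
    rw [h3, dotProduct_smul, h1]; simp
  rw [ht]
  simp only [h4]
  calc c * (v ⬝ᵥ v) * ∑ i, τ i = ∑ i, τ i * (c * (v ⬝ᵥ v) * (e i ⬝ᵥ e i)) := by
        rw [Finset.mul_sum]; refine Finset.sum_congr rfl fun i _ => ?_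
        rw [h1]; simp; ring
    _ ≤ ∑ i, τ i * ((d : ℝ) ^ 2 / n * ∑ j, (u j ⬝ᵥ v) ^ 2 * (u j ⬝ᵥ e i) ^ 2) :=
        Finset.sum_le_sum fun i _ => mul_le_mul_of_nonneg_left (hb v (e i)) (hτ i)
    _ = _ := by
        simp only [Finset.mul_sum]
        rw [Finset.sum_comm]
        refine Finset.sum_congr rfl fun j _ => Finset.sum_congr rfl fun i _ => ?_
        rw [dotProduct_comm (e i) (u j)]; ring

/-- variance lemma -/
lemma var_lower {n : ℕ} {c : ℝ} (u : Fin n → Fin d → ℝ) (hu : ∀ j, u j ⬝ᵥ u j = 1)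
    (hb : ∀ v w : Fin d → ℝ, c * (v ⬝ᵥ v) * (w ⬝ᵥ w) ≤
      (d : ℝ) ^ 2 / n * ∑ j, (u j ⬝ᵥ v) ^ 2 * (u j ⬝ᵥ w) ^ 2)
    (B : Matrix (Fin d) (Fin d) ℝ) (hB : B.IsHermitian) :
    c * (d * fsq B - B.trace ^ 2) ≤
      (d : ℝ) ^ 2 / n * ∑ j, ((B *ᵥ u j) ⬝ᵥ (B *ᵥ u j) - (u j ⬝ᵥ B *ᵥ u j) ^ 2) := by
  obtain ⟨e, τ, h1, h2, h3, h4⟩ := spectral B hB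
  have ht : B.trace = ∑ i, τ i := by
    rw [trace_basis e h1]
    refine Finset.sum_congr rfl fun i _ => ?_
    rw [h3, dotProduct_smul, h1]; simp
  have hBB : Bᵀ = B := by simpa [Matrix.IsHermitian] using hB
  have hf : fsq B = ∑ i, τ i ^ 2 := by
    rw [fsq_eq_fip, fip_eq_trace, hBB, trace_basis e h1]
    refine Finset.sum_congr rfl fun i _ => ?_
    rw [← mulVec_mulVec, h3, mulVec_smul, h3, dotProduct_smul, dotProduct_smul, h1]; simp; ring
  have hsq : ∀ w, (B *ᵥ w) ⬝ᵥ (B *ᵥ w) = ∑ i, τ i ^ 2 * (e i ⬝ᵥ w) ^ 2 := by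
    intro w
    rw [h2]
    refine Finset.sum_congr rfl fun i _ => ?_
    rw [symm_dot B hB (e i) w, h3, dotProduct_smul, dotProduct_comm w, smul_eq_mul]; ring
  have id1 : ∀ (p : Fin d → ℝ), (∑ i, τ i ^ 2 * p i) * (∑ k, p k) - (∑ i, τ i * p i) ^ 2
      = (1 / 2) * ∑ i, ∑ k, (τ i - τ k) ^ 2 * (p i * p k) := by
    intro p
    have a1 : ∑ i, ∑ k, (τ i - τ k) ^ 2 * (p i * p k) =
        ∑ i, ∑ k, ((τ i ^ 2 * p i) * p k + p i * (τ k ^ 2 * p k)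
          - 2 * ((τ i * p i) * (τ k * p k))) :=
      Finset.sum_congr rfl fun i _ => Finset.sum_congr rfl fun k _ => by ring
    rw [a1]
    simp only [Finset.sum_sub_distrib, Finset.sum_add_distrib, ← Finset.mul_sum, ← Finset.sum_mul]
    ring
  have hc := id1 (fun _ => 1)
  simp only [mul_one, Finset.sum_const, Finset.card_univ, Fintype.card_fin, nsmul_eq_mul] at hc
  have lhs : c * (d * fsq B - B.trace ^ 2) =
      (1 / 2) * ∑ i, ∑ k, (τ i - τ k) ^ 2 * (c * (e i ⬝ᵥ e i) * (e k ⬝ᵥ e k)) := by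
    rw [hf, ht, mul_comm (d : ℝ), hc]
    simp only [h1, if_true, mul_one]
    simp only [← Finset.sum_mul]; ring
  have rhs : ∀ j, (B *ᵥ u j) ⬝ᵥ (B *ᵥ u j) - (u j ⬝ᵥ B *ᵥ u j) ^ 2 =
      (1 / 2) * ∑ i, ∑ k, (τ i - τ k) ^ 2 * ((u j ⬝ᵥ e i) ^ 2 * (u j ⬝ᵥ e k) ^ 2) := by
    intro j
    have := id1 (fun i => (e i ⬝ᵥ u j) ^ 2)
    have hp : ∑ k, (e k ⬝ᵥ u j) ^ 2 = 1 := by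
      rw [← hu j, h2]; simp only [sq]
    rw [hp, mul_one] at this
    rw [hsq, h4]
    simp only [← sq]
    rw [this]
    simp only [dotProduct_comm (u j)]
  rw [lhs]
  simp only [rhs]
  calc _ ≤ (1 / 2) * ∑ i, ∑ k, (τ i - τ k) ^ 2 * ((d : ℝ) ^ 2 / n * ∑ j, (u j ⬝ᵥ e i) ^ 2 * (u j ⬝ᵥ e k) ^ 2) := by
        refine mul_le_mul_of_nonneg_left ?_ (by norm_num)
        refine Finset.sum_le_sum fun i _ => Finset.sum_le_sum fun k _ => ?_
        exact mul_le_mul_of_nonneg_left (hb (e i) (e k)) (sq_nonneg _)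
    _ = _ := by
        simp only [Finset.mul_sum]
        symm
        rw [Finset.sum_comm]
        refine Finset.sum_congr rfl fun i _ => ?_
        rw [Finset.sum_comm]
        refine Finset.sum_congr rfl fun k _ => Finset.sum_congr rfl fun j _ => by ring

end

section
variable {d : ℕ}

lemma quad_sum {n : ℕ} (r : ℝ) (f : Fin n → ℝ) (u : Fin n → Fin d → ℝ) (v w : Fin d → ℝ) :
    v ⬝ᵥ (r • ∑ j, f j • vecMulVec (u j) (u j)) *ᵥ w = r * ∑ j, f j * ((u j ⬝ᵥ v) * (u j ⬝ᵥ w)) := by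
  rw [smul_mulVec, dotProduct_smul, smul_eq_mul, sum_mulVec, dotProduct_sum]
  congr 1
  refine Finset.sum_congr rfl fun j _ => ?_
  rw [smul_mulVec, vecMulVec_mulVec, dotProduct_smul, dotProduct_smul, dotProduct_comm v]
  simp

/-- Step 1: operator norm bound for Tyler's estimator. -/
lemma tyler_op {n : ℕ} (hd : 0 < d) {c t : ℝ} (hc : 0 < c) (ht : 0 ≤ t)
    (hκ : 2 * t / c ≤ 1 / 2)
    (u : Fin n → Fin d → ℝ) (hu : ∀ j, u j ⬝ᵥ u j = 1)
    (hb : ∀ v w : Fin d → ℝ, c * (v ⬝ᵥ v) * (w ⬝ᵥ w) ≤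
      (d : ℝ) ^ 2 / n * ∑ j, (u j ⬝ᵥ v) ^ 2 * (u j ⬝ᵥ w) ^ 2)
    (hM : ∀ v : Fin d → ℝ, |(d : ℝ) / n * ∑ j, (u j ⬝ᵥ v) ^ 2 - v ⬝ᵥ v| ≤ t * (v ⬝ᵥ v))
    (T : Matrix (Fin d) (Fin d) ℝ) (hT : IsTyler u T) :
    QB (T - 1) (4 * t / c) ∧ QB (T⁻¹ - 1) (4 * t / c) := by
  obtain ⟨hpd, htr, hfix⟩ := hT
  have hG : T⁻¹.PosDef := hpd.inv
  obtain ⟨e, g, h1, h2, h3, h4⟩ := spectral T⁻¹ hG.isHermitian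
  set G := T⁻¹ with hGdef
  have hTG : T * G = 1 := Matrix.mul_nonsing_inv _ ((Matrix.isUnit_iff_isUnit_det _).1 hpd.isUnit)
  have hee : ∀ i, e i ⬝ᵥ e i = 1 := fun i => by simp [h1]
  have hene : ∀ i, e i ≠ 0 := fun i h => by have := hee i; rw [h] at this; simp at this
  have hg : ∀ i, 0 < g i := by
    intro i
    have := hG.dotProduct_mulVec_pos (hene i)
    simpa [h3, h1] using this
  have hTe : ∀ i, T *ᵥ e i = (g i)⁻¹ • e i := by
    intro i
    have : T *ᵥ (G *ᵥ e i) = e i := by rw [mulVec_mulVec, hTG, one_mulVec]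
    rw [h3, mulVec_smul] at this
    rw [← this, smul_smul, inv_mul_cancel₀ (hg i).ne', one_smul]
    rw [this]
  have hTq : ∀ w, w ⬝ᵥ T *ᵥ w = ∑ i, (g i)⁻¹ * (e i ⬝ᵥ w) ^ 2 := by
    intro w
    rw [h2]
    refine Finset.sum_congr rfl fun i _ => ?_
    rw [symm_dot T hpd.isHermitian, hTe, dotProduct_smul, dotProduct_comm w, smul_eq_mul]; ring
  have hGq : ∀ w, w ⬝ᵥ G *ᵥ w = ∑ i, g i * (e i ⬝ᵥ w) ^ 2 := by
    intro w; rw [h4]; simp only [sq]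
  have hww : ∀ w : Fin d → ℝ, w ⬝ᵥ w = ∑ i, (e i ⬝ᵥ w) ^ 2 := by
    intro w; rw [h2]; simp only [sq]
  have htrT : (d : ℝ) = ∑ i, (g i)⁻¹ := by
    rw [← htr, trace_basis e h1]
    refine Finset.sum_congr rfl fun i _ => ?_
    rw [hTe, dotProduct_smul, hee]; simp
  have htrG : G.trace = ∑ i, g i := by
    rw [trace_basis e h1]
    refine Finset.sum_congr rfl fun i _ => ?_
    rw [h3, dotProduct_smul, hee]; simp
  have : Nonempty (Fin d) := ⟨⟨0, hd⟩⟩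
  obtain ⟨i0, hi0⟩ := Finite.exists_max g
  obtain ⟨i1, hi1⟩ := Finite.exists_min g
  set a := g i0 with ha
  set b := g i1 with hbb
  have ha0 : 0 < a := hg i0
  have hb0 : 0 < b := hg i1
  have hd0 : (0 : ℝ) < d := by exact_mod_cast hd
  set q : Fin n → ℝ := fun j => u j ⬝ᵥ G *ᵥ u j with hq
  have hqa : ∀ j, q j ≤ a := by
    intro j
    calc q j = ∑ i, g i * (e i ⬝ᵥ u j) ^ 2 := hGq _
      _ ≤ ∑ i, a * (e i ⬝ᵥ u j) ^ 2 :=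
        Finset.sum_le_sum fun i _ => mul_le_mul_of_nonneg_right (hi0 i) (sq_nonneg _)
      _ = a := by rw [← Finset.mul_sum, ← hww, hu, mul_one]
  have hqb : ∀ j, b ≤ q j := by
    intro j
    calc b = ∑ i, b * (e i ⬝ᵥ u j) ^ 2 := by rw [← Finset.mul_sum, ← hww, hu, mul_one]
      _ ≤ ∑ i, g i * (e i ⬝ᵥ u j) ^ 2 :=
        Finset.sum_le_sum fun i _ => mul_le_mul_of_nonneg_right (hi1 i) (sq_nonneg _)
      _ = q j := (hGq _).symm
  have hTv : ∀ i, (g i)⁻¹ = (d : ℝ) / n * ∑ j, (q j)⁻¹ * (u j ⬝ᵥ e i) ^ 2 := by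
    intro i
    have : e i ⬝ᵥ T *ᵥ e i = (g i)⁻¹ := by rw [hTe, dotProduct_smul, hee]; simp
    rw [← this]
    conv_lhs => rw [hfix]
    rw [quad_sum]; simp only [sq]; rfl
  have hdn0 : (0 : ℝ) ≤ (d : ℝ) / n := by positivity
  -- upper side
  have hA : c * (a * d - G.trace) ≤ d * (t * a) := by
    have hpsd : (a • (1 : Matrix (Fin d) (Fin d) ℝ) - G).PosSemidef := by
      refine Matrix.PosSemidef.of_dotProduct_mulVec_nonneg ?_ ?_
      · exact (Matrix.isHermitian_one.smul (by simp [IsSelfAdjoint])).sub hG.isHermitian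
      · intro x
        simp only [star_trivial, sub_mulVec, dotProduct_sub, smul_mulVec, one_mulVec, dotProduct_smul,
          smul_eq_mul, sub_nonneg]
        rw [hGq, hww, Finset.mul_sum]
        exact Finset.sum_le_sum fun i _ => mul_le_mul_of_nonneg_right (hi0 i) (sq_nonneg _)
    have k := psd_lower u hb _ hpsd (e i0)
    rw [hee, trace_sub, trace_smul, trace_one] at k
    simp only [sub_mulVec, dotProduct_sub, smul_mulVec, one_mulVec, dotProduct_smul, smul_eq_mul, hu,
      Fintype.card_fin, mul_one] at k
    have k2 : (d : ℝ) / n * ∑ j, (u j ⬝ᵥ e i0) ^ 2 * (a - q j) ≤ t * a := by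
      have hm := (abs_le.1 (hM (e i0))).1
      rw [hee, mul_one] at hm
      have h5 : (d : ℝ) / n * ∑ j, (a⁻¹ + (a - q j) / a ^ 2) * (u j ⬝ᵥ e i0) ^ 2 ≤ a⁻¹ := by
        conv_rhs => rw [ha, hTv i0]
        refine mul_le_mul_of_nonneg_left (Finset.sum_le_sum fun j _ => ?_) hdn0
        refine mul_le_mul_of_nonneg_right ?_ (sq_nonneg _)
        have hqj : 0 < q j := hb0.trans_le (hqb j)
        rw [← sub_nonneg]
        have : (q j)⁻¹ - (a⁻¹ + (a - q j) / a ^ 2) = (a - q j) ^ 2 / (a ^ 2 * q j) := by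
          field_simp; ring
        rw [this]; positivity
      have h6 : (d : ℝ) / n * ∑ j, (a⁻¹ + (a - q j) / a ^ 2) * (u j ⬝ᵥ e i0) ^ 2 =
          a⁻¹ * ((d : ℝ) / n * ∑ j, (u j ⬝ᵥ e i0) ^ 2) +
            (a ^ 2)⁻¹ * ((d : ℝ) / n * ∑ j, (u j ⬝ᵥ e i0) ^ 2 * (a - q j)) := by
        simp only [add_mul, Finset.sum_add_distrib, Finset.mul_sum, mul_add]
        congr 1
        · exact Finset.sum_congr rfl fun j _ => by ring
        · exact Finset.sum_congr rfl fun j _ => by field_simp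
      rw [h6] at h5
      set N := (d : ℝ) / n * ∑ j, (u j ⬝ᵥ e i0) ^ 2 * (a - q j)
      set m := (d : ℝ) / n * ∑ j, (u j ⬝ᵥ e i0) ^ 2
      have h7 := mul_le_mul_of_nonneg_left h5 (sq_nonneg a)
      have e1 : a ^ 2 * (a⁻¹ * m + (a ^ 2)⁻¹ * N) = a * m + N := by field_simp
      have e2 : a ^ 2 * a⁻¹ = a := by field_simp
      rw [e1, e2] at h7
      nlinarith
    have k3 := mul_le_mul_of_nonneg_left k2 hd0.le
    calc _ ≤ _ := k
      _ = d * ((d : ℝ) / n * ∑ j, (u j ⬝ᵥ e i0) ^ 2 * (a - q j)) := by ring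
      _ ≤ _ := k3
  -- lower side
  have hB : c * (G.trace - b * d) ≤ d * (t * a) := by
    have hpsd : (G - b • (1 : Matrix (Fin d) (Fin d) ℝ)).PosSemidef := by
      refine Matrix.PosSemidef.of_dotProduct_mulVec_nonneg ?_ ?_
      · exact hG.isHermitian.sub (Matrix.isHermitian_one.smul (by simp [IsSelfAdjoint]))
      · intro x
        simp only [star_trivial, sub_mulVec, dotProduct_sub, smul_mulVec, one_mulVec, dotProduct_smul,
          smul_eq_mul, sub_nonneg]
        rw [hGq, hww, Finset.mul_sum]
        exact Finset.sum_le_sum fun i _ => mul_le_mul_of_nonneg_right (hi1 i) (sq_nonneg _)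
    have k := psd_lower u hb _ hpsd (e i1)
    rw [hee, trace_sub, trace_smul, trace_one] at k
    simp only [sub_mulVec, dotProduct_sub, smul_mulVec, one_mulVec, dotProduct_smul, smul_eq_mul, hu,
      Fintype.card_fin, mul_one] at k
    have k2 : (d : ℝ) / n * ∑ j, (u j ⬝ᵥ e i1) ^ 2 * (q j - b) ≤ t * a := by
      have hm := (abs_le.1 (hM (e i1))).2
      rw [hee, mul_one] at hm
      have h5 : b⁻¹ ≤ (d : ℝ) / n * ∑ j, (b⁻¹ - (q j - b) / (a * b)) * (u j ⬝ᵥ e i1) ^ 2 := by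
        conv_lhs => rw [hbb, hTv i1]
        refine mul_le_mul_of_nonneg_left (Finset.sum_le_sum fun j _ => ?_) hdn0
        refine mul_le_mul_of_nonneg_right ?_ (sq_nonneg _)
        have hqj : 0 < q j := hb0.trans_le (hqb j)
        rw [← sub_nonneg]
        have : b⁻¹ - (q j - b) / (a * b) - (q j)⁻¹ = (a - q j) * (q j - b) / (a * b * q j) := by
          field_simp; ring
        rw [this]
        have := hqa j; have := hqb j
        exact div_nonneg (mul_nonneg (by linarith) (by linarith)) (by positivity)
      have h6 : (d : ℝ) / n * ∑ j, (b⁻¹ - (q j - b) / (a * b)) * (u j ⬝ᵥ e i1) ^ 2 =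
          b⁻¹ * ((d : ℝ) / n * ∑ j, (u j ⬝ᵥ e i1) ^ 2) -
            (a * b)⁻¹ * ((d : ℝ) / n * ∑ j, (u j ⬝ᵥ e i1) ^ 2 * (q j - b)) := by
        simp only [sub_mul, Finset.sum_sub_distrib, Finset.mul_sum, mul_sub]
        congr 1
        · exact Finset.sum_congr rfl fun j _ => by ring
        · rw [← Finset.sum_sub_distrib]; exact Finset.sum_congr rfl fun j _ => by field_simp
      rw [h6] at h5
      set N := (d : ℝ) / n * ∑ j, (u j ⬝ᵥ e i1) ^ 2 * (q j - b)
      set m := (d : ℝ) / n * ∑ j, (u j ⬝ᵥ e i1) ^ 2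
      have h7 := mul_le_mul_of_nonneg_left h5 (mul_pos ha0 hb0).le
      have e1 : a * b * (b⁻¹ * m - (a * b)⁻¹ * N) = a * m - N := by field_simp
      have e2 : a * b * b⁻¹ = a := by field_simp
      rw [e1, e2] at h7
      nlinarith
    have k3 := mul_le_mul_of_nonneg_left k2 hd0.le
    calc _ ≤ _ := k
      _ = d * ((d : ℝ) / n * ∑ j, (u j ⬝ᵥ e i1) ^ 2 * (q j - b)) := by ring
      _ ≤ _ := k3
  set κ := 2 * t / c with hκd
  have hκ0 : 0 ≤ κ := by positivity
  have hab : (1 - κ) * a ≤ b := by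
    have h8 : c * ((a - b) * d) ≤ (2 * t * a) * d := by nlinarith
    have h9 : c * (a - b) ≤ 2 * t * a := by
      refine le_of_mul_le_mul_right ?_ hd0; linarith
    have h10 : a - b ≤ κ * a := by
      rw [hκd, div_mul_eq_mul_div, le_div_iff₀ hc]; linarith
    linarith
  have ha1 : 1 ≤ a := by
    by_contra hlt
    push Not at hlt
    have : (d : ℝ) < ∑ i, (g i)⁻¹ := by
      calc (d : ℝ) = ∑ _i : Fin d, (1 : ℝ) := by simp
        _ < _ := Finset.sum_lt_sum_of_nonempty Finset.univ_nonempty fun i _ =>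
          (one_lt_inv₀ (hg i)).2 ((hi0 i).trans_lt hlt)
    linarith
  have hb1 : b ≤ 1 := by
    by_contra hlt
    push Not at hlt
    have : ∑ i, (g i)⁻¹ < d := by
      calc _ < ∑ _i : Fin d, (1 : ℝ) := Finset.sum_lt_sum_of_nonempty Finset.univ_nonempty fun i _ =>
            inv_lt_one_of_one_lt₀ (hlt.trans_le (hi1 i))
        _ = d := by simp
    linarith
  have hgl : ∀ i, 1 - κ ≤ g i := fun i => by have := hi1 i; nlinarith
  have hgu : ∀ i, (1 - κ) * g i ≤ 1 := fun i => by have := hi0 i; nlinarith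
  have h4t : 4 * t / c = 2 * κ := by rw [hκd]; ring
  rw [h4t]
  constructor
  · intro w
    rw [sub_mulVec, one_mulVec, dotProduct_sub, hTq, hww, ← Finset.sum_sub_distrib, Finset.mul_sum]
    refine (Finset.abs_sum_le_sum_abs _ _).trans (Finset.sum_le_sum fun i _ => ?_)
    rw [show (g i)⁻¹ * (e i ⬝ᵥ w) ^ 2 - (e i ⬝ᵥ w) ^ 2 = ((g i)⁻¹ - 1) * (e i ⬝ᵥ w) ^ 2 by ring, abs_mul,
      abs_of_nonneg (sq_nonneg (e i ⬝ᵥ w))]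
    refine mul_le_mul_of_nonneg_right ?_ (sq_nonneg _)
    have := hg i; have := hgl i; have := hgu i
    rw [abs_le]; constructor
    · have : 1 - κ ≤ (g i)⁻¹ := by
        rw [le_inv_comm₀ (by linarith) (hg i), le_inv_comm₀ (hg i) (by linarith)]
        rw [← one_div, le_div_iff₀ (hg i)]; linarith
      linarith
    · have : (g i)⁻¹ ≤ 1 + 2 * κ := by
        rw [inv_le_comm₀ (hg i) (by linarith), ← one_div, div_le_iff₀ (by linarith)]; nlinarith
      linarith
  · intro w
    rw [sub_mulVec, one_mulVec, dotProduct_sub, hGq, hww, ← Finset.sum_sub_distrib, Finset.mul_sum]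
    refine (Finset.abs_sum_le_sum_abs _ _).trans (Finset.sum_le_sum fun i _ => ?_)
    rw [show g i * (e i ⬝ᵥ w) ^ 2 - (e i ⬝ᵥ w) ^ 2 = (g i - 1) * (e i ⬝ᵥ w) ^ 2 by ring, abs_mul,
      abs_of_nonneg (sq_nonneg (e i ⬝ᵥ w))]
    refine mul_le_mul_of_nonneg_right ?_ (sq_nonneg _)
    have := hg i; have := hgl i; have := hgu i
    rw [abs_le]; constructor
    · linarith
    · nlinarith

end

section
variable {d : ℕ}

lemma fip_sum_vec {n : ℕ} (r : ℝ) (f : Fin n → ℝ) (u : Fin n → Fin d → ℝ)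
    (A : Matrix (Fin d) (Fin d) ℝ) :
    fip A (r • ∑ j, f j • vecMulVec (u j) (u j)) = r * ∑ j, f j * (u j ⬝ᵥ A *ᵥ u j) := by
  rw [fip_smul_right, fip_sum_right]
  simp only [fip_smul_right, fip_vec]

lemma isHerm_sum {n : ℕ} (r : ℝ) (f : Fin n → ℝ) (u : Fin n → Fin d → ℝ) :
    (r • ∑ j, f j • vecMulVec (u j) (u j)).IsHermitian := by
  ext i k
  simp only [conjTranspose_apply, Matrix.smul_apply, Matrix.sum_apply, vecMulVec_apply, star_trivial]
  congr 1
  exact Finset.sum_congr rfl fun j _ => by rw [mul_comm]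

lemma scalarQ {c t b2 tr2 SB Q s dd : ℝ} (hd : 0 < dd) (hc : 0 < c) (htc : t ≤ c / 2) (hb0 : 0 ≤ b2)
    (hvar : c * (dd * b2 - tr2) ≤ dd * (SB - Q)) (hBu : SB ≤ (1 + t) * b2)
    (htr : tr2 ≤ 16 * s ^ 4 * dd ^ 2) : Q ≤ (1 - c / 2) * b2 + 16 * c * s ^ 4 * dd := by
  have h1 := mul_le_mul_of_nonneg_left htr hc.le
  have h2 : dd * (c * b2 - 16 * c * s ^ 4 * dd) ≤ dd * (SB - Q) := by linarith
  have h3 := le_of_mul_le_mul_left h2 hd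
  have := mul_le_mul_of_nonneg_right htc hb0
  linarith

lemma scalarF {c b2 y2 z2 E Q f1 f2 : ℝ} (hc : 0 < c) (hc1 : c ≤ 1) (hb0 : 0 ≤ b2) (hE0 : 0 ≤ E)
    (hQb : b2 ≤ (y2 + Q) / 2) (hQ : Q ≤ (1 - c / 2) * b2 + 16 * E) (hyeq : y2 = b2 - f1 - f2)
    (h1 : |f1| ≤ c / 16 * y2 + 4 / c * z2) (h2 : |f2| ≤ c / 16 * b2 + 4 / c * (40 * E)) :
    b2 ≤ 16 / c ^ 2 * (z2 + 44 * E) := by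
  have a1 := (abs_le.1 h1).1
  have a2 := (abs_le.1 h2).1
  have hy : (1 + c / 2) * b2 - 16 * E ≤ y2 := by linarith
  have hfin : (1 - c / 16) * y2 ≤ (1 + c / 16) * b2 + 4 / c * (z2 + 40 * E) := by linarith
  have hcb : c / 4 * b2 ≤ 16 * E + 4 / c * (z2 + 40 * E) := by
    have h1 := mul_le_mul_of_nonneg_left hy (show 0 ≤ 1 - c / 16 by linarith)
    have h2 : 0 ≤ (1 - c) * c * b2 := by
      have : 0 ≤ 1 - c := by linarith
      positivity
    have h3 : 0 ≤ c * E := by positivity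
    have h4 : 0 ≤ c * b2 := by positivity
    nlinarith
  have h1 : 16 * E ≤ 4 / c * (4 * E) := by
    rw [div_mul_eq_mul_div, le_div_iff₀ hc]; nlinarith
  have h2 : c / 4 * b2 ≤ 4 / c * (z2 + 44 * E) := by
    calc _ ≤ _ := hcb
      _ ≤ 4 / c * (4 * E) + 4 / c * (z2 + 40 * E) := by linarith
      _ = _ := by ring
  have h3 := mul_le_mul_of_nonneg_left h2 (show 0 ≤ 4 / c by positivity)
  calc b2 = 4 / c * (c / 4 * b2) := by field_simp
    _ ≤ _ := h3
    _ = _ := by field_simp; ring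

lemma scalarG {c b2 z2 E F f1 : ℝ} (hc : 0 < c) (hc1 : c ≤ 1) (hE0 : 0 ≤ E) (hz0 : 0 ≤ z2)
    (hl : F ≤ 2 * f1 + 2 * b2) (hf : f1 ≤ 16 * E) (hb : b2 ≤ 16 / c ^ 2 * (z2 + 44 * E)) :
    F ≤ 1440 / c ^ 2 * (z2 + E) := by
  have hcc : 1 ≤ 1 / c ^ 2 := by
    rw [le_div_iff₀ (by positivity)]; nlinarith
  have e3 : 32 * E ≤ 1 / c ^ 2 * (32 * E) := by nlinarith
  have e4 : 0 ≤ 1 / c ^ 2 * z2 := by positivity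
  calc F ≤ 32 * E + 2 * (16 / c ^ 2 * (z2 + 44 * E)) := by linarith
    _ ≤ 1 / c ^ 2 * (32 * E) + 2 * (16 / c ^ 2 * (z2 + 44 * E)) := by linarith
    _ = 1 / c ^ 2 * (32 * z2) + 1440 / c ^ 2 * E := by ring
    _ ≤ 1440 / c ^ 2 * (z2 + E) := by
      have : 1440 / c ^ 2 * (z2 + E) = 1440 * (1 / c ^ 2 * z2) + 1440 / c ^ 2 * E := by ring
      rw [this]; linarith

set_option maxHeartbeats 1000000 in
/-- Step 2: Frobenius bound for Tyler's estimator. -/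
lemma tyler_fro {n : ℕ} (hd : 0 < d) {c t s : ℝ} (hc : 0 < c) (hc1 : c ≤ 1) (ht : 0 ≤ t)
    (htc : t ≤ c / 2) (hs : 0 < s) (hs1 : s ≤ 1 / 2)
    (u : Fin n → Fin d → ℝ) (hu : ∀ j, u j ⬝ᵥ u j = 1)
    (hb : ∀ v w : Fin d → ℝ, c * (v ⬝ᵥ v) * (w ⬝ᵥ w) ≤
      (d : ℝ) ^ 2 / n * ∑ j, (u j ⬝ᵥ v) ^ 2 * (u j ⬝ᵥ w) ^ 2)
    (hM : ∀ v : Fin d → ℝ, |(d : ℝ) / n * ∑ j, (u j ⬝ᵥ v) ^ 2 - v ⬝ᵥ v| ≤ t * (v ⬝ᵥ v))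
    (T : Matrix (Fin d) (Fin d) ℝ) (hT : IsTyler u T)
    (hT1 : QB (T - 1) s) (hD1 : QB (T⁻¹ - 1) s)
    (M : Matrix (Fin d) (Fin d) ℝ) (hMd : M = ((d : ℝ) / n) • ∑ j, vecMulVec (u j) (u j)) :
    fsq (T - M) ≤ 1440 / c ^ 2 *
      ((d : ℝ) / n * ∑ j, (u j ⬝ᵥ (M - 1) *ᵥ u j) ^ 2 + s ^ 4 * d) := by
  obtain ⟨hpd, htr, hfix⟩ := hT
  have hG : T⁻¹.PosDef := hpd.inv
  set G := T⁻¹ with hGdef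
  set D := G - 1 with hD
  have hTG : T * G = 1 := Matrix.mul_nonsing_inv _ ((Matrix.isUnit_iff_isUnit_det _).1 hpd.isUnit)
  have hGT : G * T = 1 := Matrix.nonsing_inv_mul _ ((Matrix.isUnit_iff_isUnit_det _).1 hpd.isUnit)
  have hDH : D.IsHermitian := hG.isHermitian.sub isHermitian_one
  set r : ℝ := (d : ℝ) / n with hr
  have hr0 : 0 ≤ r := by positivity
  have hd0 : (0 : ℝ) < d := by exact_mod_cast hd
  set x : Fin n → ℝ := fun j => u j ⬝ᵥ D *ᵥ u j with hx
  have hxs : ∀ j, |x j| ≤ s := fun j => by have := hD1 (u j); rwa [hu, mul_one] at this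
  have hq : ∀ j, u j ⬝ᵥ G *ᵥ u j = 1 + x j := by
    intro j; simp only [hx, hD, sub_mulVec, dotProduct_sub, one_mulVec, hu]; ring
  set B := r • ∑ j, x j • vecMulVec (u j) (u j) with hB
  set R1 := r • ∑ j, (x j ^ 2 / (1 + x j)) • vecMulVec (u j) (u j) with hR1
  set R2 := D * T * D with hR2
  have hBH : B.IsHermitian := isHerm_sum _ _ _
  have hR1H : R1.IsHermitian := isHerm_sum _ _ _
  have eqT : T = M - B + R1 := by
    rw [hfix, hMd, hB, hR1, ← smul_sub, ← smul_add, ← Finset.sum_sub_distrib, ← Finset.sum_add_distrib]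
    congr 1
    refine Finset.sum_congr rfl fun j _ => ?_
    have hj := abs_le.1 (hxs j)
    have h1x : 0 < 1 + x j := by linarith [hj.1]
    rw [hq, show (1 + x j)⁻¹ = 1 - x j + x j ^ 2 / (1 + x j) by field_simp; ring, add_smul, sub_smul, one_smul]
  have eqD : -D = (T - 1) - R2 := by
    have : R2 = G - 1 - 1 + T := by
      rw [hR2, hD, sub_mul, hGT, one_mul, sub_mul, one_mul, mul_sub, hTG, mul_one]; abel
    rw [this, hD]; abel
  -- R1
  have hR1v : ∀ v, v ⬝ᵥ R1 *ᵥ v = r * ∑ j, (x j ^ 2 / (1 + x j)) * (u j ⬝ᵥ v) ^ 2 := by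
    intro v; rw [hR1, quad_sum]; simp only [sq]
  have hR1c : ∀ j, 0 ≤ x j ^ 2 / (1 + x j) ∧ x j ^ 2 / (1 + x j) ≤ 2 * s ^ 2 := by
    intro j
    have hj := abs_le.1 (hxs j)
    have h1x : 0 < 1 + x j := by linarith [hj.1]
    refine ⟨by positivity, ?_⟩
    rw [div_le_iff₀ h1x]
    have : x j ^ 2 ≤ s ^ 2 := by nlinarith [hj.1, hj.2]
    have : 1 ≤ 2 * (1 + x j) := by linarith [hj.1]
    nlinarith [sq_nonneg s]
  have hR1Q : QB R1 (4 * s ^ 2) := by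
    intro v
    have p := hM v
    have p2 := (abs_le.1 p).2
    have hvv := dot_self_nonneg v
    rw [hR1v, abs_of_nonneg (mul_nonneg hr0 (Finset.sum_nonneg fun j _ => mul_nonneg (hR1c j).1 (sq_nonneg _)))]
    calc r * ∑ j, (x j ^ 2 / (1 + x j)) * (u j ⬝ᵥ v) ^ 2 ≤ r * ∑ j, (2 * s ^ 2) * (u j ⬝ᵥ v) ^ 2 :=
          mul_le_mul_of_nonneg_left (Finset.sum_le_sum fun j _ =>
            mul_le_mul_of_nonneg_right (hR1c j).2 (sq_nonneg _)) hr0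
      _ = 2 * s ^ 2 * (r * ∑ j, (u j ⬝ᵥ v) ^ 2) := by rw [← Finset.mul_sum]; ring
      _ ≤ 2 * s ^ 2 * (2 * (v ⬝ᵥ v)) := by
          refine mul_le_mul_of_nonneg_left ?_ (by positivity)
          nlinarith
      _ = _ := by ring
  have hR1f : fsq R1 ≤ 16 * s ^ 4 * d := by
    have := fsq_le_of_QB hR1H (by positivity) hR1Q
    nlinarith
  have hOD : OB D s := QB_mulVec hDH hs hD1
  have hOT : OB T 2 := by
    refine QB_mulVec hpd.isHermitian (by norm_num) fun v => ?_
    have p := abs_le.1 (hT1 v)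
    rw [sub_mulVec, one_mulVec, dotProduct_sub] at p
    have hvv := dot_self_nonneg v
    rw [abs_le]; constructor <;> nlinarith
  have hR2f : fsq R2 ≤ 4 * s ^ 4 * d := by
    have h1 := fsq_mul_le hOD (T * D)
    have h2 := fsq_mul_le hOT D
    have h3 := fsq_le_of_OB hOD
    rw [hR2, mul_assoc]
    have h4 := mul_le_mul_of_nonneg_left h2 (sq_nonneg s)
    have h5 := mul_le_mul_of_nonneg_left h3 (sq_nonneg s)
    nlinarith
  set R := R1 - R2 with hR
  have hRf : fsq R ≤ 40 * s ^ 4 * d := by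
    have := fsq_add_le R1 (-R2)
    rw [← sub_eq_add_neg, fsq_neg] at this
    linarith
  have eqMain : -D = (M - 1) - B + R := by rw [eqD, eqT, hR]; abel
  -- scalars
  set y2 := r * ∑ j, x j ^ 2 with hy2
  set z2 := r * ∑ j, (u j ⬝ᵥ (M - 1) *ᵥ u j) ^ 2 with hz2
  set b2 := fsq B with hb2
  have fBA : ∀ A, fip B A = r * ∑ j, x j * (u j ⬝ᵥ A *ᵥ u j) := by
    intro A; rw [fip_comm, hB, fip_sum_vec]
  have hBD : fip B D = y2 := by rw [fBA, hy2]; simp only [sq]; rfl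
  have hy0 : 0 ≤ y2 := mul_nonneg hr0 (Finset.sum_nonneg fun j _ => sq_nonneg _)
  have hz0 : 0 ≤ z2 := mul_nonneg hr0 (Finset.sum_nonneg fun j _ => sq_nonneg _)
  have hb0 : 0 ≤ b2 := fsq_nonneg _
  have young : ∀ θ : ℝ, 0 < θ → ∀ h : Fin n → ℝ,
      |r * ∑ j, x j * h j| ≤ θ / 2 * y2 + 1 / (2 * θ) * (r * ∑ j, h j ^ 2) := by
    intro θ hθ h
    rw [abs_mul, abs_of_nonneg hr0]
    have : |∑ j, x j * h j| ≤ ∑ j, (θ / 2 * x j ^ 2 + 1 / (2 * θ) * h j ^ 2) := by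
      refine (Finset.abs_sum_le_sum_abs _ _).trans (Finset.sum_le_sum fun j _ => ?_)
      have e1 : θ / 2 * x j ^ 2 + 1 / (2 * θ) * h j ^ 2 = 1 / (2 * θ) * ((θ * x j) ^ 2 + h j ^ 2) := by
        field_simp
      have e2 : |x j * h j| = 1 / (2 * θ) * (2 * |θ * x j| * |h j|) := by
        rw [abs_mul, abs_mul, abs_of_pos hθ]; field_simp
      rw [e1, e2]
      refine mul_le_mul_of_nonneg_left ?_ (by positivity)
      have := two_mul_le_add_sq |θ * x j| |h j|
      rwa [sq_abs, sq_abs] at this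
    calc _ ≤ r * ∑ j, (θ / 2 * x j ^ 2 + 1 / (2 * θ) * h j ^ 2) := mul_le_mul_of_nonneg_left this hr0
      _ = _ := by
        rw [Finset.sum_add_distrib, ← Finset.mul_sum, ← Finset.mul_sum, hy2]; ring
  have hBM : |fip B (M - 1)| ≤ c / 16 * y2 + 4 / c * z2 := by
    rw [fBA]
    have := young (c / 8) (by positivity) (fun j => u j ⬝ᵥ (M - 1) *ᵥ u j)
    refine this.trans (le_of_eq ?_)
    rw [hz2]; field_simp; ring
  have hBR : |fip B R| ≤ c / 16 * b2 + 4 / c * (40 * s ^ 4 * d) := by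
    have h1 := fip_sq_le B R
    have h2 : (fip B R) ^ 2 ≤ b2 * (40 * s ^ 4 * d) := h1.trans (mul_le_mul_of_nonneg_left hRf hb0)
    set ρ := 40 * s ^ 4 * d
    have hρ : 0 ≤ ρ := by positivity
    refine abs_le_of_sq_le_sq (h2.trans ?_) (by positivity)
    have : (c / 16 * b2 + 4 / c * ρ) ^ 2 = (c / 16 * b2 - 4 / c * ρ) ^ 2 + b2 * ρ := by
      field_simp; ring
    rw [this]; nlinarith [sq_nonneg (c / 16 * b2 - 4 / c * ρ)]
  -- trace of B
  have htrM : M.trace = d := by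
    by_cases hn : (n : ℝ) = 0
    · exfalso
      have hr' : r = 0 := by rw [hr, hn, div_zero]
      have : T = 0 := by rw [hfix, hr', zero_smul]
      rw [this, trace_zero] at htr; linarith
    rw [hMd, trace_smul, trace_sum]
    simp only [trace_vecMulVec, hu]
    simp [hr]; field_simp
  have htrB : B.trace = R1.trace := by
    have := congrArg Matrix.trace eqT
    rw [trace_add, trace_sub, htr, htrM] at this
    linarith
  have htrB2 : B.trace ^ 2 ≤ 16 * s ^ 4 * d ^ 2 := by
    rw [htrB, ← fip_one]
    have := fip_sq_le 1 R1
    rw [fsq_one] at this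
    nlinarith
  -- Q bound
  set Q := r * ∑ j, (u j ⬝ᵥ B *ᵥ u j) ^ 2 with hQ
  have hQb : b2 ≤ (y2 + Q) / 2 := by
    have h1 : b2 = fip B B := fsq_eq_fip B
    have := (le_abs_self _).trans (young 1 one_pos (fun j => u j ⬝ᵥ B *ᵥ u j))
    rw [h1, fBA]
    refine this.trans (le_of_eq ?_)
    rw [hQ]; ring
  have hBu : r * ∑ j, (B *ᵥ u j) ⬝ᵥ (B *ᵥ u j) ≤ (1 + t) * b2 := by
    calc r * ∑ j, (B *ᵥ u j) ⬝ᵥ (B *ᵥ u j) = ∑ i, r * ∑ j, (u j ⬝ᵥ B i) ^ 2 := by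
          rw [← Finset.mul_sum, Finset.sum_comm]
          congr 1
          refine Finset.sum_congr rfl fun j _ => ?_
          rw [dot_self_eq]
          refine Finset.sum_congr rfl fun i _ => ?_
          rw [dotProduct_comm]; rfl
      _ ≤ ∑ i, (1 + t) * (B i ⬝ᵥ B i) := by
          refine Finset.sum_le_sum fun i _ => ?_
          have := (abs_le.1 (hM (B i))).2
          linarith
      _ = (1 + t) * b2 := by
          rw [← Finset.mul_sum, hb2, fsq]; simp only [dot_self_eq]
  have hvar := var_lower u hu hb B hBH
  have hQ2 : Q ≤ (1 - c / 2) * b2 + 16 * c * s ^ 4 * d := by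
    have e1 : (d : ℝ) ^ 2 / n * ∑ j, ((B *ᵥ u j) ⬝ᵥ (B *ᵥ u j) - (u j ⬝ᵥ B *ᵥ u j) ^ 2) =
        d * (r * ∑ j, (B *ᵥ u j) ⬝ᵥ (B *ᵥ u j) - Q) := by
      rw [Finset.sum_sub_distrib, hQ, hr]; ring
    rw [e1] at hvar
    exact scalarQ hd0 hc htc hb0 hvar hBu htrB2
  set E := s ^ 4 * d with hE
  have hE0 : 0 ≤ E := by positivity
  have hE1 : c * E ≤ E := by nlinarith
  have hQ3 : Q ≤ (1 - c / 2) * b2 + 16 * E := by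
    refine hQ2.trans ?_
    have : 16 * c * s ^ 4 * d = 16 * (c * E) := by rw [hE]; ring
    linarith
  have hyeq : y2 = b2 - fip B (M - 1) - fip B R := by
    have := congrArg (fip B) eqMain
    rw [fip_neg_right, hBD, fip_add_right, fip_sub_right B (M - 1), ← fsq_eq_fip] at this
    linarith
  have hBR' : |fip B R| ≤ c / 16 * b2 + 4 / c * (40 * E) := by
    refine hBR.trans (le_of_eq ?_); rw [hE]; ring
  have hb2f : b2 ≤ 16 / c ^ 2 * (z2 + 44 * E) :=
    scalarF hc hc1 hb0 hE0 hQb hQ3 hyeq hBM hBR'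
  have hTM : T - M = R1 + (-B) := by rw [eqT]; abel
  have hl := fsq_add_le R1 (-B)
  rw [← hTM, fsq_neg] at hl
  have hR1f' : fsq R1 ≤ 16 * E := by refine hR1f.trans (le_of_eq ?_); rw [hE]; ring
  exact scalarG hc hc1 hE0 hz0 hl hR1f' hb2f

end

section
lemma net_half (E : Type*) [NormedAddCommGroup E] [NormedSpace ℝ E] [FiniteDimensional ℝ E] :
    ∃ N : Finset E, N.card ≤ 5 ^ Module.finrank ℝ E ∧
      ∀ x : E, ‖x‖ ≤ 1 → ∃ y ∈ N, ‖x - y‖ ≤ 1 / 2 := by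
  classical
  let S : Set ℕ := {k | ∃ s : Finset E, s.card = k ∧ (∀ c ∈ s, ‖c‖ ≤ 2) ∧
    (∀ c ∈ s, ∀ d ∈ s, c ≠ d → 1 ≤ ‖c - d‖)}
  have hS : S.Nonempty := ⟨0, ∅, by simp⟩
  have hbd : BddAbove S := by
    refine ⟨5 ^ Module.finrank ℝ E, ?_⟩
    rintro k ⟨s, rfl, h1, h2⟩
    exact Besicovitch.card_le_of_separated s h1 h2
  obtain ⟨s, hs, h1, h2⟩ := Nat.sSup_mem hS hbd
  refine ⟨s.image (fun y => (1 / 2 : ℝ) • y), ?_, ?_⟩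
  · exact Finset.card_image_le.trans (Besicovitch.card_le_of_separated s h1 h2)
  · intro x hx
    by_contra! hcon
    have h2x : ∀ y ∈ s, 1 < ‖(2 : ℝ) • x - y‖ := by
      intro y hy
      have := hcon _ (Finset.mem_image_of_mem _ hy)
      have e : (2 : ℝ) • x - y = (2 : ℝ) • (x - (1 / 2 : ℝ) • y) := by
        rw [smul_sub, smul_smul]; norm_num
      rw [e, norm_smul]; norm_num; linarith
    have hns : (2 : ℝ) • x ∉ s := fun h => by have := h2x _ h; simp at this; linarith
    have : s.card + 1 ∈ S := by
      refine ⟨insert ((2 : ℝ) • x) s, by rw [Finset.card_insert_of_notMem hns], ?_, ?_⟩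
      · intro c hc
        rcases Finset.mem_insert.1 hc with rfl | hc
        · rw [norm_smul]; norm_num; linarith
        · exact h1 c hc
      · intro c hc e he hne
        rcases Finset.mem_insert.1 hc with rfl | hc <;> rcases Finset.mem_insert.1 he with rfl | he
        · exact absurd rfl hne
        · exact (h2x e he).le
        · rw [norm_sub_rev]; exact (h2x c hc).le
        · exact h2 c hc e he hne
    have := le_csSup hbd this
    omega

lemma net_pow (E : Type*) [NormedAddCommGroup E] [NormedSpace ℝ E] [FiniteDimensional ℝ E] (k : ℕ) :
    ∃ N : Finset E, N.card ≤ (5 ^ Module.finrank ℝ E) ^ k ∧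
      ∀ x : E, ‖x‖ ≤ 1 → ∃ y ∈ N, ‖x - y‖ ≤ (1 / 2) ^ k := by
  classical
  obtain ⟨N0, h0, h0'⟩ := net_half E
  induction k with
  | zero => exact ⟨{0}, by simp, fun x hx => ⟨0, by simp, by simpa using hx⟩⟩
  | succ k ih =>
    obtain ⟨N, h1, h2⟩ := ih
    refine ⟨(N ×ˢ N0).image (fun p => p.1 + ((1 / 2 : ℝ) ^ k) • p.2), ?_, ?_⟩
    · refine Finset.card_image_le.trans ?_
      rw [Finset.card_product, pow_succ]
      exact Nat.mul_le_mul h1 h0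
    · intro x hx
      obtain ⟨y, hy, hxy⟩ := h2 x hx
      obtain ⟨y', hy', hxy'⟩ := h0' ((2 : ℝ) ^ k • (x - y)) (by
        rw [norm_smul]; simp only [norm_pow, Real.norm_ofNat]
        calc (2 : ℝ) ^ k * ‖x - y‖ ≤ 2 ^ k * (1 / 2) ^ k := by gcongr
          _ = 1 := by rw [← mul_pow]; norm_num)
      refine ⟨y + ((1 / 2 : ℝ) ^ k) • y', Finset.mem_image.2 ⟨(y, y'), by simp [hy, hy'], rfl⟩, ?_⟩
      have e : x - (y + ((1 / 2 : ℝ) ^ k) • y') = ((1 / 2 : ℝ) ^ k) • ((2 : ℝ) ^ k • (x - y) - y') := by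
        rw [smul_sub, smul_smul, ← mul_pow]; norm_num; abel
      rw [e, norm_smul, pow_succ]
      simp only [norm_pow]
      norm_num at hxy' ⊢
      gcongr

lemma net_sphere (d k : ℕ) : ∃ N : Finset (Fin d → ℝ), N.card ≤ (5 ^ d) ^ k ∧
    (∀ y ∈ N, y ⬝ᵥ y = 1) ∧
    ∀ v : Fin d → ℝ, v ⬝ᵥ v = 1 → ∃ y ∈ N, (v - y) ⬝ᵥ (v - y) ≤ (2 * (1 / 2) ^ k) ^ 2 := by
  classical
  obtain ⟨N, h1, h2⟩ := net_pow (EuclideanSpace ℝ (Fin d)) k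
  rw [finrank_euclideanSpace_fin] at h1
  have hn : ∀ v : EuclideanSpace ℝ (Fin d), v.ofLp ⬝ᵥ v.ofLp = ‖v‖ ^ 2 := by
    intro v; rw [EuclideanSpace.real_norm_sq_eq, dot_self_eq]
  let P : EuclideanSpace ℝ (Fin d) → Prop := fun y => ∃ v : EuclideanSpace ℝ (Fin d), ‖v‖ = 1 ∧ ‖v - y‖ ≤ (1 / 2) ^ k
  let f : EuclideanSpace ℝ (Fin d) → EuclideanSpace ℝ (Fin d) := fun y => if h : P y then h.choose else 0
  have hf : ∀ y, P y → ‖f y‖ = 1 ∧ ‖f y - y‖ ≤ (1 / 2) ^ k := by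
    intro y h; simp only [f, dif_pos h]; exact h.choose_spec
  refine ⟨((N.filter P).image (fun y => (f y).ofLp)), ?_, ?_, ?_⟩
  · exact Finset.card_image_le.trans ((Finset.card_filter_le _ _).trans h1)
  · intro y hy
    obtain ⟨x, hx, rfl⟩ := Finset.mem_image.1 hy
    rw [hn, (hf x (Finset.mem_filter.1 hx).2).1]; norm_num
  · intro v hv
    have hv1 : ‖WithLp.toLp 2 v‖ = 1 := by
      have := hn (WithLp.toLp 2 v)
      rw [show (WithLp.toLp 2 v).ofLp = v from rfl, hv] at this
      nlinarith [norm_nonneg (WithLp.toLp 2 v)]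
    obtain ⟨y, hy, hxy⟩ := h2 (WithLp.toLp 2 v) hv1.le
    have hP : P y := ⟨_, hv1, hxy⟩
    refine ⟨(f y).ofLp, Finset.mem_image.2 ⟨y, Finset.mem_filter.2 ⟨hy, hP⟩, rfl⟩, ?_⟩
    have := hn (WithLp.toLp 2 v - f y)
    rw [show (WithLp.toLp 2 v - f y).ofLp = v - (f y).ofLp from rfl] at this
    rw [this]
    gcongr
    calc ‖WithLp.toLp 2 v - f y‖ = ‖(WithLp.toLp 2 v - y) - (f y - y)‖ := by congr 1; abel
      _ ≤ _ := norm_sub_le _ _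
      _ ≤ _ := by linarith [(hf y hP).2]

lemma dot_sq_le {d : ℕ} (x y : Fin d → ℝ) : (x ⬝ᵥ y) ^ 2 ≤ (x ⬝ᵥ x) * (y ⬝ᵥ y) := by
  rw [dot_self_eq, dot_self_eq]
  exact Finset.sum_mul_sq_le_sq_mul_sq _ _ _

lemma QB_of_net {d : ℕ} {A : Matrix (Fin d) (Fin d) ℝ} (hA : A.IsHermitian) {t : ℝ} (ht : 0 ≤ t)
    (N : Finset (Fin d → ℝ)) (hN1 : ∀ y ∈ N, y ⬝ᵥ y = 1)
    (hN : ∀ v : Fin d → ℝ, v ⬝ᵥ v = 1 → ∃ y ∈ N, (v - y) ⬝ᵥ (v - y) ≤ (2 * (1 / 2) ^ 3) ^ 2)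
    (h : ∀ y ∈ N, |y ⬝ᵥ A *ᵥ y| ≤ t) : QB A (2 * t) := by
  obtain ⟨e, τ, h1, h2, h3, h4⟩ := spectral A hA
  rcases Nat.eq_zero_or_pos d with rfl | hd
  · intro v; simp [dotProduct]
  have : Nonempty (Fin d) := ⟨⟨0, hd⟩⟩
  obtain ⟨i0, hi0⟩ := Finite.exists_max (fun i => |τ i|)
  set L := |τ i0| with hL
  have hL0 : 0 ≤ L := abs_nonneg _
  have hQ : QB A L := by
    intro w
    rw [h4, h2, Finset.mul_sum]
    refine (Finset.abs_sum_le_sum_abs _ _).trans (Finset.sum_le_sum fun i _ => ?_)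
    rw [abs_mul, ← sq, abs_of_nonneg (sq_nonneg (e i ⬝ᵥ w))]
    exact mul_le_mul_of_nonneg_right (hi0 i) (sq_nonneg _)
  have hO : OB A L := by
    intro w
    have e1 : (A *ᵥ w) ⬝ᵥ (A *ᵥ w) = ∑ i, τ i ^ 2 * (e i ⬝ᵥ w) ^ 2 := by
      rw [h2]
      refine Finset.sum_congr rfl fun i _ => ?_
      rw [symm_dot A hA (e i) w, h3, dotProduct_smul, dotProduct_comm w, smul_eq_mul]; ring
    rw [e1, h2 w w, Finset.mul_sum]
    refine Finset.sum_le_sum fun i _ => ?_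
    rw [← sq (e i ⬝ᵥ w)]
    refine mul_le_mul_of_nonneg_right ?_ (sq_nonneg _)
    rw [hL, sq_abs]; exact sq_le_sq.2 (hi0 i)
  suffices hLt : L ≤ 2 * t by
    intro w
    exact (hQ w).trans (mul_le_mul_of_nonneg_right hLt (dot_self_nonneg w))
  set v := e i0 with hv
  have hvv : v ⬝ᵥ v = 1 := by simp [hv, h1]
  obtain ⟨y, hy, hvy⟩ := hN v hvv
  have hyy := hN1 y hy
  have hvA : |v ⬝ᵥ A *ᵥ v| = L := by
    rw [hv, h3, dotProduct_smul, ← hv, hvv, smul_eq_mul, mul_one]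
  have hdiff : v ⬝ᵥ A *ᵥ v - y ⬝ᵥ A *ᵥ y = (v - y) ⬝ᵥ A *ᵥ (v + y) := by
    simp only [mulVec_add, dotProduct_add, sub_dotProduct]
    rw [symm_dot A hA v y]; ring
  have hs := dot_sq_le (v - y) (A *ᵥ (v + y))
  have hs2 := hO (v + y)
  have hs3 : (v + y) ⬝ᵥ (v + y) ≤ 4 := by
    have : (v + y) ⬝ᵥ (v + y) + (v - y) ⬝ᵥ (v - y) = 2 * (v ⬝ᵥ v + y ⬝ᵥ y) := by
      simp only [dotProduct_add, add_dotProduct, sub_dotProduct, dotProduct_sub]; ring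
    have := dot_self_nonneg (v - y)
    linarith
  have hs4 : ((v - y) ⬝ᵥ A *ᵥ (v + y)) ^ 2 ≤ (L / 2) ^ 2 := by
    refine hs.trans ?_
    have a1 : A *ᵥ (v + y) ⬝ᵥ A *ᵥ (v + y) ≤ L ^ 2 * 4 := hs2.trans (mul_le_mul_of_nonneg_left hs3 (sq_nonneg _))
    have a2 := mul_le_mul hvy a1 (dot_self_nonneg _) (by positivity)
    refine a2.trans (le_of_eq ?_)
    ring
  have hs5 := abs_le_of_sq_le_sq hs4 (by positivity)
  have := h y hy
  have h6 : L ≤ t + L / 2 := by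
    rw [← hvA]
    calc |v ⬝ᵥ A *ᵥ v| = |y ⬝ᵥ A *ᵥ y + (v - y) ⬝ᵥ A *ᵥ (v + y)| := by rw [← hdiff]; congr 1; ring
      _ ≤ _ := abs_add_le _ _
      _ ≤ t + |v ⬝ᵥ A *ᵥ v| / 2 := by rw [hvA]; linarith [hs5]
  linarith

end

section
noncomputable def gm (d : ℕ) : Measure (Fin d → ℝ) := Measure.pi fun _ : Fin d => gaussianReal 0 1

instance (d : ℕ) : IsProbabilityMeasure (gm d) := by unfold gm; infer_instance

lemma gauss_pdf_eq (a x : ℝ) : gaussianPDFReal 0 1 x * Real.exp (a * x^2)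
    = (Real.sqrt (2 * Real.pi))⁻¹ * Real.exp (-(1/2 - a) * x^2) := by
  rw [gaussianPDFReal_def]
  simp only [NNReal.coe_one, mul_one, sub_zero]
  rw [mul_assoc, ← Real.exp_add]
  congr 2; ring

lemma gauss_exp_sq_integrable {a : ℝ} (ha : a < 1/2) :
    Integrable (fun x : ℝ => Real.exp (a * x^2)) (gaussianReal 0 1) := by
  rw [gaussianReal_of_var_ne_zero 0 one_ne_zero]
  rw [integrable_withDensity_iff_integrable_smul' (by fun_prop)
    (ae_of_all _ fun _ => gaussianPDF_lt_top)]
  simp only [toReal_gaussianPDF, smul_eq_mul, gauss_pdf_eq]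
  exact (integrable_exp_neg_mul_sq (by linarith)).const_mul _

lemma gauss_exp_sq {a : ℝ} (ha : a < 1/2) :
    ∫ x : ℝ, Real.exp (a * x^2) ∂(gaussianReal 0 1) = (Real.sqrt (1 - 2*a))⁻¹ := by
  rw [integral_gaussianReal_eq_integral_smul one_ne_zero]
  simp only [smul_eq_mul, gauss_pdf_eq]
  rw [integral_const_mul, integral_gaussian, ← Real.sqrt_inv, ← Real.sqrt_inv,
    ← Real.sqrt_mul (by positivity)]
  congr 1
  have : 1 - 2*a ≠ 0 := by linarith
  have : 1/2 - a ≠ 0 := by linarith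
  have := Real.pi_ne_zero
  field_simp

lemma gm_map_dot {d : ℕ} (v : Fin d → ℝ) (hv : v ⬝ᵥ v = 1) :
    (gm d).map (fun x => v ⬝ᵥ x) = gaussianReal 0 1 := by
  let L : StrongDual ℝ (EuclideanSpace ℝ (Fin d)) := innerSL ℝ (WithLp.toLp 2 v)
  have h1 := IsGaussian.map_eq_gaussianReal (μ := stdGaussian (EuclideanSpace ℝ (Fin d))) L
  rw [integral_strongDual_stdGaussian, variance_dual_stdGaussian] at h1
  have hL : ‖L‖^2 = 1 := by
    have : ‖L‖ = ‖WithLp.toLp 2 v‖ := innerSL_apply_norm _ _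
    rw [this, EuclideanSpace.real_norm_sq_eq, ← hv]
    simp [dotProduct, sq]
  rw [hL, ← map_pi_eq_stdGaussian, Measure.map_map (by fun_prop) (by fun_prop)] at h1
  rw [Real.toNNReal_one] at h1
  rw [← h1, gm]
  congr 1
  ext x
  simp [L, dotProduct, PiLp.inner_apply, mul_comm]

lemma meas_dot {d : ℕ} (v : Fin d → ℝ) : Measurable (fun x : Fin d → ℝ => v ⬝ᵥ x) := by
  unfold dotProduct; fun_prop

lemma meas_dot' {d : ℕ} (v : Fin d → ℝ) : Measurable (fun x : Fin d → ℝ => x ⬝ᵥ v) := by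
  unfold dotProduct; fun_prop

lemma meas_self {d : ℕ} : Measurable (fun x : Fin d → ℝ => x ⬝ᵥ x) := by
  unfold dotProduct; fun_prop

lemma gm_exp_integrable {d : ℕ} (v : Fin d → ℝ) (hv : v ⬝ᵥ v = 1) :
    Integrable (fun x => Real.exp ((v ⬝ᵥ x)^2/4)) (gm d) := by
  have h := gauss_exp_sq_integrable (a := 1/4) (by norm_num)
  rw [← gm_map_dot v hv] at h
  have h2 := (integrable_map_measure h.aestronglyMeasurable (meas_dot v).aemeasurable).1 h
  refine h2.congr (ae_of_all _ fun x => ?_)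
  simp only [Function.comp]; congr 1; ring

lemma gm_exp {d : ℕ} (v : Fin d → ℝ) (hv : v ⬝ᵥ v = 1) :
    ∫ x, Real.exp ((v ⬝ᵥ x)^2/4) ∂(gm d) ≤ 2 := by
  have h := gauss_exp_sq_integrable (a := 1/4) (by norm_num)
  have h3 := gauss_exp_sq (a := 1/4) (by norm_num)
  rw [← gm_map_dot v hv] at h h3
  rw [integral_map (meas_dot v).aemeasurable h.aestronglyMeasurable] at h3
  calc _ = ∫ x, Real.exp (1/4 * (v ⬝ᵥ x)^2) ∂(gm d) := by congr 1; ext x; congr 1; ring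
    _ = _ := h3
    _ ≤ 2 := by
      rw [← Real.sqrt_inv, Real.sqrt_le_left (by norm_num)]; norm_num

lemma gm_sq {d : ℕ} (v : Fin d → ℝ) (hv : v ⬝ᵥ v = 1) :
    ∫ x, (v ⬝ᵥ x)^2 ∂(gm d) = 1 := by
  have h3 : ∫ x, x^2 ∂(gaussianReal 0 1) = 1 := by
    have := variance_fun_id_gaussianReal (μ := 0) (v := 1)
    rw [variance_of_integral_eq_zero (by fun_prop) (by simp)] at this
    simpa using this
  rw [← gm_map_dot v hv, integral_map (meas_dot v).aemeasurable (by fun_prop)] at h3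
  exact h3

lemma gm_exp_neg_integrable (d : ℕ) (a : ℝ):
    Integrable (fun x => Real.exp (a - x ⬝ᵥ x)) (gm d) := by
  refine (integrable_const (Real.exp a)).mono' ?_ (ae_of_all _ fun x => ?_)
  · exact (Real.measurable_exp.comp (measurable_const.sub meas_self)).aestronglyMeasurable
  · rw [Real.norm_eq_abs, Real.abs_exp, Real.exp_le_exp]
    have : 0 ≤ x ⬝ᵥ x := dot_self_nonneg x
    linarith

lemma gm_exp_neg (d : ℕ) : ∫ x, Real.exp (21/40 * d - x ⬝ᵥ x) ∂(gm d) ≤ 1 := by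
  have h1 : ∀ x : Fin d → ℝ, Real.exp (21/40*d - x ⬝ᵥ x) = ∏ i, Real.exp (21/40 - (x i)^2) := by
    intro x
    rw [← Real.exp_sum]; congr 1
    simp [dotProduct, sq, mul_comm]
  simp only [h1, gm]
  rw [integral_fintype_prod_eq_prod (f := fun (_ : Fin d) x => Real.exp (21/40 - x^2))]
  refine Finset.prod_le_one (fun i _ => integral_nonneg fun x => (Real.exp_pos _).le) fun i _ => ?_
  have h3 := gauss_exp_sq (a := -1) (by norm_num)
  have : ∀ x : ℝ, Real.exp (21/40 - x^2) = Real.exp (21/40) * Real.exp (-1 * x^2) := by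
    intro x; rw [← Real.exp_add]; congr 1; ring
  simp only [this]
  rw [integral_const_mul, h3]
  rw [← div_eq_mul_inv, div_le_one (by norm_num), Real.le_sqrt (by positivity), ← Real.exp_nat_mul]
  have : Real.exp ((2:ℕ) * (21/40)) ≤ 3 := by
    have h := Real.exp_bound' (x := 1/20) (by norm_num) (by norm_num) (n := 2) (by norm_num)
    have h2 := Real.exp_one_lt_d9
    have : ((2:ℕ):ℝ) * (21/40) = 1 + 1/20 := by norm_num
    rw [this, Real.exp_add]
    simp [Finset.sum_range_succ] at h
    norm_num at h
    have h0 := Real.exp_pos (1/20)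
    nlinarith
  · linarith
  · norm_num

lemma gm_ne_zero {d : ℕ} (hd : 0 < d) : ∀ᵐ x ∂(gm d), x ≠ 0 := by
  have hv : (Pi.single ⟨0, hd⟩ (1:ℝ) : Fin d → ℝ) ⬝ᵥ Pi.single ⟨0, hd⟩ (1:ℝ) = 1 := by simp
  have h := gm_map_dot _ hv
  have h2 : ∀ᵐ y ∂(gaussianReal 0 1), y ≠ (0:ℝ) := by
    have := nullSingletonClass_gaussianReal (μ := 0) (v := 1) one_ne_zero
    rw [ae_iff]; simp
  rw [← h] at h2
  have := ae_of_ae_map (meas_dot _).aemeasurable h2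
  filter_upwards [this] with x hx h0
  rw [h0] at hx; simp at hx

end

section
noncomputable def Un {d : ℕ} (x : Fin d → ℝ) : Fin d → ℝ := (Real.sqrt (x ⬝ᵥ x))⁻¹ • x

lemma Un_apply {d : ℕ} (x : Fin d → ℝ) (i) : Un x i = (Real.sqrt (x ⬝ᵥ x))⁻¹ * x i := rfl

lemma Un_meas {d : ℕ} : Measurable (Un : (Fin d → ℝ) → Fin d → ℝ) := by
  refine measurable_pi_iff.2 fun i => ?_
  exact (meas_self.sqrt.inv).mul (measurable_pi_apply i)

lemma Un_dot_sq {d : ℕ} (x v : Fin d → ℝ) : (Un x ⬝ᵥ v)^2 = (x ⬝ᵥ v)^2 / (x ⬝ᵥ x) := by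
  rw [Un, smul_dotProduct, smul_eq_mul, mul_pow, inv_pow, Real.sq_sqrt (dot_self_nonneg x)]
  ring

lemma Un_self {d : ℕ} (x : Fin d → ℝ) (hx : x ≠ 0) : Un x ⬝ᵥ Un x = 1 := by
  have h : 0 < x ⬝ᵥ x := (dot_self_nonneg x).lt_of_ne fun h => hx (dotProduct_self_eq_zero.1 h.symm)
  rw [Un, smul_dotProduct, dotProduct_smul, smul_eq_mul, smul_eq_mul, ← mul_assoc, ← mul_inv,
    Real.mul_self_sqrt h.le]
  exact inv_mul_cancel₀ h.ne'

lemma Un_dot_sq_le {d : ℕ} (x v : Fin d → ℝ) : (Un x ⬝ᵥ v)^2 ≤ v ⬝ᵥ v := by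
  rcases eq_or_ne x 0 with rfl | hx
  · simp [Un, dot_self_nonneg]
  · have := dot_sq_le (Un x) v
    rwa [Un_self x hx, one_mul] at this

lemma Un_meas_dot {d : ℕ} (v : Fin d → ℝ) : Measurable (fun x : Fin d → ℝ => Un x ⬝ᵥ v) :=
  (meas_dot' v).comp Un_meas

lemma Un_coord_sq_le {d : ℕ} (x : Fin d → ℝ) (i : Fin d) : |Un x i| ≤ 1 := by
  have := Un_dot_sq_le x (Pi.single i 1)
  simp at this
  exact this

lemma Un_int {d : ℕ} (i j : Fin d) : Integrable (fun x => Un x i * Un x j) (gm d) := by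
  refine (integrable_const (1:ℝ)).mono' ?_ (ae_of_all _ fun x => ?_)
  · have h1 : Measurable fun x : Fin d → ℝ => Un x i := (measurable_pi_apply i).comp Un_meas
    have h2 : Measurable fun x : Fin d → ℝ => Un x j := (measurable_pi_apply j).comp Un_meas
    exact (h1.mul h2).aestronglyMeasurable
  · rw [Real.norm_eq_abs, abs_mul]
    have := Un_coord_sq_le x i
    have := Un_coord_sq_le x j
    have := abs_nonneg (Un x i)
    have := abs_nonneg (Un x j)
    nlinarith

lemma Un_off {d : ℕ} (i j : Fin d) (hij : i ≠ j) : ∫ x, Un x i * Un x j ∂(gm d) = 0 := by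
  have hp : MeasurePreserving (fun (x : Fin d → ℝ) k => if k = i then - x k else x k) (gm d) (gm d) := by
    refine measurePreserving_pi (f := fun k y => if k = i then - y else y) _ _ fun k => ?_
    by_cases hk : k = i
    · simp only [hk, if_true]
      exact ⟨measurable_neg, by simpa using gaussianReal_map_neg (μ := 0) (v := 1)⟩
    · simp only [hk, if_false]; exact MeasurePreserving.id _
  have h := integral_map hp.measurable.aemeasurable (f := fun x => Un x i * Un x j)
    (by rw [hp.map_eq]; exact (Un_int i j).aestronglyMeasurable)
  rw [hp.map_eq] at h
  have h2 : ∀ x : Fin d → ℝ, (fun k => if k = i then - x k else x k) ⬝ᵥ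
      (fun k => if k = i then - x k else x k) = x ⬝ᵥ x := by
    intro x; unfold dotProduct; refine Finset.sum_congr rfl fun k _ => ?_
    dsimp only; split_ifs <;> ring
  have h3 : ∀ x : Fin d → ℝ, Un (fun k => if k = i then - x k else x k) i *
      Un (fun k => if k = i then - x k else x k) j = -(Un x i * Un x j) := by
    intro x
    simp only [Un_apply, h2, if_true, if_neg hij.symm]; ring
  simp only [h3] at h
  rw [integral_neg] at h
  linarith

lemma Un_diag {d : ℕ} (i j : Fin d) : ∫ x, Un x i * Un x i ∂(gm d) = ∫ x, Un x j * Un x j ∂(gm d) := by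
  have hp : MeasurePreserving (fun (x : Fin d → ℝ) k => x (Equiv.swap i j k)) (gm d) (gm d) := by
    have := measurePreserving_arrowCongr' (fun _ : Fin d => gaussianReal 0 1)
      (fun _ : Fin d => gaussianReal 0 1) (Equiv.swap i j) (MeasurableEquiv.refl ℝ)
      (fun _ => MeasurePreserving.id _)
    exact this
  have h := integral_map hp.measurable.aemeasurable (f := fun x => Un x i * Un x i)
    (by rw [hp.map_eq]; exact (Un_int i i).aestronglyMeasurable)
  rw [hp.map_eq] at h
  have h2 : ∀ x : Fin d → ℝ, (fun k => x (Equiv.swap i j k)) ⬝ᵥ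
      (fun k => x (Equiv.swap i j k)) = x ⬝ᵥ x := by
    intro x; unfold dotProduct
    exact Equiv.sum_comp (Equiv.swap i j) (fun k => x k * x k)
  have h3 : ∀ x : Fin d → ℝ, Un (fun k => x (Equiv.swap i j k)) i = Un x j := by
    intro x
    simp only [Un_apply, h2, Equiv.swap_apply_left]
  simp only [h3] at h
  exact h

lemma Un_diag_val {d : ℕ} (hd : 0 < d) (i : Fin d) : ∫ x, Un x i * Un x i ∂(gm d) = 1 / d := by
  have h1 : ∑ j : Fin d, ∫ x, Un x j * Un x j ∂(gm d) = 1 := by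
    rw [← integral_finsetSum _ fun j _ => Un_int j j]
    have : (fun x : Fin d → ℝ => ∑ j, Un x j * Un x j) =ᵐ[gm d] fun _ => 1 := by
      filter_upwards [gm_ne_zero hd] with x hx
      exact Un_self x hx
    rw [integral_congr_ae this]; simp
  rw [Finset.sum_congr rfl fun j _ => Un_diag j i] at h1
  simp at h1
  rw [eq_div_iff (by positivity), mul_comm]; exact h1

lemma Un_quad_int {d : ℕ} (v w : Fin d → ℝ) :
    Integrable (fun x => (Un x ⬝ᵥ v) * (Un x ⬝ᵥ w)) (gm d) := by
  have : ∀ x : Fin d → ℝ, (Un x ⬝ᵥ v) * (Un x ⬝ᵥ w) = ∑ i, ∑ j, (v i * w j) * (Un x i * Un x j) := by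
    intro x; unfold dotProduct; rw [Finset.sum_mul_sum]
    refine Finset.sum_congr rfl fun i _ => Finset.sum_congr rfl fun j _ => ?_
    ring
  simp only [this]
  exact integrable_finsetSum _ fun i _ => integrable_finsetSum _ fun j _ => (Un_int i j).const_mul _

lemma Un_cov {d : ℕ} (hd : 0 < d) (v w : Fin d → ℝ) :
    ∫ x, (Un x ⬝ᵥ v) * (Un x ⬝ᵥ w) ∂(gm d) = (v ⬝ᵥ w) / d := by
  have : ∀ x : Fin d → ℝ, (Un x ⬝ᵥ v) * (Un x ⬝ᵥ w) = ∑ i, ∑ j, (v i * w j) * (Un x i * Un x j) := by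
    intro x; unfold dotProduct; rw [Finset.sum_mul_sum]
    refine Finset.sum_congr rfl fun i _ => Finset.sum_congr rfl fun j _ => ?_
    ring
  simp only [this]
  rw [integral_finsetSum _ fun i _ => integrable_finsetSum _ fun j _ => (Un_int i j).const_mul _]
  rw [dotProduct, Finset.sum_div]
  refine Finset.sum_congr rfl fun i _ => ?_
  rw [integral_finsetSum _ fun j _ => (Un_int i j).const_mul _]
  rw [Finset.sum_eq_single i]
  · rw [integral_const_mul, Un_diag_val hd]; ring
  · intro j _ hj
    rw [integral_const_mul, Un_off i j hj.symm, mul_zero]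
  · simp

lemma Un_exp_le {d : ℕ} (x v : Fin d → ℝ) (hv : v ⬝ᵥ v = 1) :
    Real.exp (1/40 * (d * (Un x ⬝ᵥ v)^2)) ≤
      Real.exp ((v ⬝ᵥ x)^2/4) + Real.exp (21/40*d - x ⬝ᵥ x) := by
  by_cases h : x ⬝ᵥ x < d/10
  · have h1 := Un_dot_sq_le x v
    rw [hv] at h1
    have : 1/40 * (d * (Un x ⬝ᵥ v)^2) ≤ 21/40*d - x ⬝ᵥ x := by
      have : (d:ℝ) * (Un x ⬝ᵥ v)^2 ≤ d * 1 := mul_le_mul_of_nonneg_left h1 (by positivity)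
      linarith
    have := Real.exp_le_exp.2 this
    have := Real.exp_pos ((v ⬝ᵥ x)^2/4)
    linarith
  · push Not at h
    have : 1/40 * (d * (Un x ⬝ᵥ v)^2) ≤ (v ⬝ᵥ x)^2/4 := by
      rw [Un_dot_sq, dotProduct_comm x v]
      rcases (dot_self_nonneg x).eq_or_lt with h0 | h0
      · rw [← h0]; simp; positivity
      · rw [← mul_div_assoc, ← mul_div_assoc, div_le_iff₀ h0]
        have := mul_le_mul_of_nonneg_left h (sq_nonneg (v ⬝ᵥ x))
        linarith
    have := Real.exp_le_exp.2 this
    have := Real.exp_pos (21/40*d - x ⬝ᵥ x)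
    linarith

lemma Un_exp_int {d : ℕ} (v : Fin d → ℝ) (hv : v ⬝ᵥ v = 1) :
    Integrable (fun x => Real.exp (1/40 * (d * (Un x ⬝ᵥ v)^2))) (gm d) := by
  refine ((gm_exp_integrable v hv).add (gm_exp_neg_integrable d (21/40*d))).mono' ?_
    (ae_of_all _ fun x => ?_)
  · exact (Real.measurable_exp.comp ((((Un_meas_dot v).pow_const 2).const_mul _).const_mul _)).aestronglyMeasurable
  · rw [Real.norm_eq_abs, Real.abs_exp]; exact Un_exp_le x v hv

lemma Un_exp {d : ℕ} (v : Fin d → ℝ) (hv : v ⬝ᵥ v = 1) :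
    ∫ x, Real.exp (1/40 * (d * (Un x ⬝ᵥ v)^2)) ∂(gm d) ≤ 3 := by
  refine (integral_mono (Un_exp_int v hv) ((gm_exp_integrable v hv).add
    (gm_exp_neg_integrable d (21/40*d))) fun x => Un_exp_le x v hv).trans ?_
  simp only [Pi.add_apply]
  rw [integral_add (gm_exp_integrable v hv) (gm_exp_neg_integrable d (21/40*d))]
  linarith [gm_exp v hv, gm_exp_neg d]

lemma exp_abs_sub_one {s : ℝ} (hs : 0 ≤ s) :
    Real.exp (1/40 * |s - 1|) ≤ 5/4 * Real.exp (1/40 * s) := by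
  have h1 : 1/40 * |s - 1| ≤ 1/40 + 1/40*s := by
    have := abs_sub s 1
    rw [abs_of_nonneg hs] at this; simp at this; linarith
  refine (Real.exp_le_exp.2 h1).trans ?_
  rw [Real.exp_add]
  refine mul_le_mul_of_nonneg_right ?_ (Real.exp_pos _).le
  have h := Real.exp_bound' (x := 1/40) (by norm_num) (by norm_num) (n := 2) (by norm_num)
  simp [Finset.sum_range_succ] at h
  norm_num at h
  linarith

/-- exponential moment conditions -/
def ExpM {d : ℕ} (f : (Fin d → ℝ) → ℝ) : Prop :=
  Measurable f ∧ Integrable (fun x => Real.exp (1/40 * |f x|)) (gm d) ∧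
    ∫ x, Real.exp (1/40 * |f x|) ∂(gm d) ≤ 4 ∧ ∫ x, f x ∂(gm d) = 0

lemma expM_of {d : ℕ} (g : (Fin d → ℝ) → ℝ) (hg : Measurable g) (h0 : ∀ x, 0 ≤ g x)
    (hi : Integrable (fun x => Real.exp (1/40 * g x)) (gm d))
    (h3 : ∫ x, Real.exp (1/40 * g x) ∂(gm d) ≤ 3) (h1 : ∫ x, g x ∂(gm d) = 1) :
    ExpM (fun x => g x - 1) := by
  have hgi : Integrable g (gm d) := by
    by_contra h
    rw [integral_undef h] at h1; norm_num at h1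
  have hI : Integrable (fun x => Real.exp (1/40 * |g x - 1|)) (gm d) := by
    refine (hi.const_mul (5/4)).mono' (by fun_prop) (ae_of_all _ fun x => ?_)
    rw [Real.norm_eq_abs, Real.abs_exp]; exact exp_abs_sub_one (h0 x)
  refine ⟨hg.sub_const 1, hI, ?_, ?_⟩
  · refine (integral_mono hI (hi.const_mul (5/4)) fun x => exp_abs_sub_one (h0 x)).trans ?_
    rw [integral_const_mul]; linarith
  · rw [integral_sub hgi (integrable_const _), h1]; simp

lemma expM_U {d : ℕ} (hd : 0 < d) (v : Fin d → ℝ) (hv : v ⬝ᵥ v = 1) :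
    ExpM (fun x : Fin d → ℝ => d * (Un x ⬝ᵥ v)^2 - 1) := by
  refine expM_of _ (((Un_meas_dot v).pow_const 2).const_mul _) (fun x => by positivity)
    (Un_exp_int v hv) (Un_exp v hv) ?_
  rw [integral_const_mul]
  simp only [sq]
  rw [Un_cov hd, hv]
  field_simp

lemma expM_X {d : ℕ} (v : Fin d → ℝ) (hv : v ⬝ᵥ v = 1) :
    ExpM (fun x : Fin d → ℝ => (x ⬝ᵥ v)^2 - 1) := by
  have hc : ∀ x : Fin d → ℝ, x ⬝ᵥ v = v ⬝ᵥ x := fun x => dotProduct_comm _ _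
  simp only [hc]
  have hle : ∀ x, Real.exp (1/40 * (v ⬝ᵥ x)^2) ≤ Real.exp ((v ⬝ᵥ x)^2/4) := by
    intro x; rw [Real.exp_le_exp]; nlinarith [sq_nonneg (v ⬝ᵥ x)]
  have hm := (meas_dot v).pow_const 2
  have hi : Integrable (fun x => Real.exp (1/40 * (v ⬝ᵥ x)^2)) (gm d) := by
    refine (gm_exp_integrable v hv).mono' (by fun_prop) (ae_of_all _ fun x => ?_)
    rw [Real.norm_eq_abs, Real.abs_exp]; exact hle x
  refine expM_of _ hm (fun x => by positivity) hi ?_ (gm_sq v hv)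
  linarith [integral_mono hi (gm_exp_integrable v hv) hle, gm_exp v hv]

end

section
lemma gauss_small (a : ℝ) (ha : 0 ≤ a) : (gaussianReal 0 1) (Set.Ioo (-a) a) ≤ ENNReal.ofReal a := by
  rw [gaussianReal_apply _ one_ne_zero]
  have h1 : ∀ x, gaussianPDF 0 1 x ≤ ENNReal.ofReal (1/2) := by
    intro x
    rw [gaussianPDF_def]
    refine ENNReal.ofReal_le_ofReal ?_
    rw [gaussianPDFReal_def]
    simp only [NNReal.coe_one, mul_one, sub_zero]
    have h2 : Real.exp (-x^2/2) ≤ 1 := Real.exp_le_one_iff.2 (by nlinarith [sq_nonneg x])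
    have h3 : (Real.sqrt (2 * Real.pi))⁻¹ ≤ 1/2 := by
      rw [inv_le_comm₀ (by positivity) (by norm_num), Real.le_sqrt (by norm_num) (by positivity)]
      have := Real.pi_gt_three
      norm_num; linarith
    have h4 := Real.exp_pos (-x^2/2)
    have h5 : 0 ≤ (Real.sqrt (2 * Real.pi))⁻¹ := by positivity
    nlinarith
  calc _ ≤ ∫⁻ x in Set.Ioo (-a) a, ENNReal.ofReal (1/2) := lintegral_mono fun x => h1 x
    _ = ENNReal.ofReal (1/2) * ENNReal.ofReal (2*a) := by
        rw [setLIntegral_const, Real.volume_Ioo]; congr 2; ring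
    _ = ENNReal.ofReal a := by rw [← ENNReal.ofReal_mul (by norm_num)]; congr 1; ring

lemma gm_small {d : ℕ} (v : Fin d → ℝ) (hv : v ⬝ᵥ v = 1) (a : ℝ) (ha : 0 ≤ a) :
    (gm d).real {x | |x ⬝ᵥ v| < a} ≤ a := by
  have h := gauss_small a ha
  rw [← gm_map_dot v hv, Measure.map_apply (meas_dot v) measurableSet_Ioo] at h
  refine ENNReal.toReal_le_of_le_ofReal ha ?_
  convert h using 2
  ext x; simp [abs_lt, dotProduct_comm x v]

lemma gauss_sq_sq_int : Integrable (fun x : ℝ => (x^2)^2) (gaussianReal 0 1) := by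
  refine ((gauss_exp_sq_integrable (a := 1/4) (by norm_num)).const_mul 32).mono' (by fun_prop)
    (ae_of_all _ fun x => ?_)
  rw [Real.norm_eq_abs, abs_of_nonneg (by positivity)]
  have := Real.quadratic_le_exp_of_nonneg (x := 1/4*x^2) (by positivity)
  nlinarith [sq_nonneg x]

lemma gauss_sq_memLp : MemLp (fun x : ℝ => x^2) 2 (gaussianReal 0 1) := by
  rw [memLp_two_iff_integrable_sq (by fun_prop)]
  exact gauss_sq_sq_int

lemma gauss_sq_one : ∫ x, x^2 ∂(gaussianReal 0 1) = 1 := by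
  have := variance_fun_id_gaussianReal (μ := 0) (v := 1)
  rw [variance_of_integral_eq_zero (by fun_prop) (by simp)] at this
  simpa using this

lemma gm_self_mem (d : ℕ) : MemLp (∑ i : Fin d, fun x : Fin d → ℝ => (x i)^2) 2 (gm d) := by
  refine memLp_finsetSum' _ fun i _ => ?_
  exact gauss_sq_memLp.comp_measurePreserving (measurePreserving_eval _ i)

lemma gm_self_fun (d : ℕ) : (∑ i : Fin d, fun x : Fin d → ℝ => (x i)^2) = fun x => x ⬝ᵥ x := by
  ext x; simp [dotProduct, sq]

lemma gm_self_int (d : ℕ) : Integrable (fun x : Fin d → ℝ => x ⬝ᵥ x) (gm d) := by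
  have := (gm_self_mem d).integrable (by norm_num)
  rwa [gm_self_fun] at this

lemma gm_self_mean (d : ℕ) : ∫ x : Fin d → ℝ, x ⬝ᵥ x ∂(gm d) = d := by
  have he : ∀ x : Fin d → ℝ, x ⬝ᵥ x = ∑ i, (x i)^2 := fun x => by simp [dotProduct, sq]
  simp only [he]
  rw [integral_finsetSum]
  · have : ∀ i : Fin d, ∫ x : Fin d → ℝ, (x i)^2 ∂(gm d) = 1 := by
      intro i
      have h := (measurePreserving_eval (fun _ : Fin d => gaussianReal 0 1) i)
      have h2 := gauss_sq_one
      rw [← h.map_eq, integral_map h.measurable.aemeasurable (by fun_prop)] at h2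
      exact h2
    simp [this]
  · intro i _
    exact (gauss_sq_memLp.comp_measurePreserving (measurePreserving_eval _ i)).integrable (by norm_num)

noncomputable def gvar : ℝ := Var[fun x : ℝ => x^2; gaussianReal 0 1]
lemma gvar_nonneg : 0 ≤ gvar := variance_nonneg _ _

lemma gm_self_sq_int (d : ℕ) : Integrable (fun x : Fin d → ℝ => ((d:ℝ) - x ⬝ᵥ x)^2) (gm d) := by
  have := (gm_self_mem d)
  rw [gm_self_fun] at this
  exact ((memLp_const (d:ℝ)).sub this).integrable_sq

lemma gm_self_var (d : ℕ) : ∫ x : Fin d → ℝ, ((d:ℝ) - x ⬝ᵥ x)^2 ∂(gm d) = d * gvar := by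
  have h := variance_sum_pi (μ := fun _ : Fin d => gaussianReal 0 1) (X := fun _ x => x^2)
    (fun _ => gauss_sq_memLp)
  have h2 := variance_eq_integral (gm_self_mem d).aemeasurable
  rw [gm] at h2
  rw [h2, ← gm, gm_self_fun, gm_self_mean] at h
  simp at h
  rw [gvar, ← h]
  congr 1; ext x; ring

lemma gm_large {d : ℕ} (hd : 0 < d) : (gm d).real {x | 8 * (d:ℝ) ≤ x ⬝ᵥ x} ≤ 1/8 := by
  have := mul_meas_ge_le_integral_of_nonneg (ae_of_all _ fun x => dot_self_nonneg x) (gm_self_int d) (8*d)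
  rw [gm_self_mean] at this
  have hd' : (0:ℝ) < d := by positivity
  nlinarith

noncomputable def gfun {d : ℕ} (v w x : Fin d → ℝ) : ℝ :=
  min (Real.sqrt d * |Un x ⬝ᵥ v|) 1 * min (Real.sqrt d * |Un x ⬝ᵥ w|) 1

lemma gfun_nonneg {d : ℕ} (v w x : Fin d → ℝ) : 0 ≤ gfun v w x := by unfold gfun; positivity
lemma gfun_le {d : ℕ} (v w x : Fin d → ℝ) : gfun v w x ≤ 1 :=
  mul_le_one₀ (min_le_right _ _) (by positivity) (min_le_right _ _)

lemma gfun_meas {d : ℕ} (v w : Fin d → ℝ) : Measurable (gfun v w) := by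
  have h1 := Un_meas_dot v
  have h2 := Un_meas_dot w
  unfold gfun
  exact (((h1.abs).const_mul _).min measurable_const).mul (((h2.abs).const_mul _).min measurable_const)

lemma gfun_int {d : ℕ} (v w : Fin d → ℝ) : Integrable (gfun v w) (gm d) := by
  refine (integrable_const (1:ℝ)).mono' (gfun_meas v w).aestronglyMeasurable (ae_of_all _ fun x => ?_)
  rw [Real.norm_eq_abs, abs_of_nonneg (gfun_nonneg _ _ _)]; exact gfun_le _ _ _

lemma g1_lower {d : ℕ} (x v : Fin d → ℝ) (h0 : 0 < x ⬝ᵥ x) (h : x ⬝ᵥ x ≤ 8 * d) (hx : 1/8 ≤ |x ⬝ᵥ v|) :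
    1/24 ≤ min (Real.sqrt d * |Un x ⬝ᵥ v|) 1 := by
  refine le_min ?_ (by norm_num)
  refine abs_le_of_sq_le_sq' ?_ (by positivity) |>.2
  rw [mul_pow, sq_abs, Real.sq_sqrt (by positivity), Un_dot_sq, ← sq_abs (x ⬝ᵥ v), ← mul_div_assoc, le_div_iff₀ h0]
  have : (1/8)^2 ≤ |x ⬝ᵥ v|^2 := by gcongr
  have hd : (0:ℝ) ≤ d := by positivity
  nlinarith

lemma gfun_lower {d : ℕ} (hd : 0 < d) (v w : Fin d → ℝ) (hv : v ⬝ᵥ v = 1) (hw : w ⬝ᵥ w = 1) :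
    1/1000 ≤ ∫ x, gfun v w x ∂(gm d) := by
  set E1 := {x : Fin d → ℝ | |x ⬝ᵥ v| < 1/8}
  set E2 := {x : Fin d → ℝ | |x ⬝ᵥ w| < 1/8}
  set E3 := {x : Fin d → ℝ | 8 * (d:ℝ) ≤ x ⬝ᵥ x}
  have m1 : MeasurableSet E1 := measurableSet_lt (meas_dot' v).abs measurable_const
  have m2 : MeasurableSet E2 := measurableSet_lt (meas_dot' w).abs measurable_const
  have m3 : MeasurableSet E3 := measurableSet_le measurable_const meas_self
  have hE : (gm d).real ((E1 ∪ E2) ∪ E3) ≤ 3/8 := by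
    have a1 := measureReal_union_le (μ := gm d) (E1 ∪ E2) E3
    have a2 := measureReal_union_le (μ := gm d) E1 E2
    have := gm_small v hv (1/8) (by norm_num)
    have := gm_small w hw (1/8) (by norm_num)
    have := gm_large hd
    linarith
  have hc := measureReal_compl (μ := gm d) ((m1.union m2).union m3)
  rw [probReal_univ] at hc
  have hle : ∫ x, (((E1 ∪ E2) ∪ E3)ᶜ).indicator (fun _ => (1:ℝ)/576) x ∂(gm d) ≤ ∫ x, gfun v w x ∂(gm d) := by
    refine integral_mono_ae ((integrable_const _).indicator ((m1.union m2).union m3).compl) (gfun_int v w) ?_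
    filter_upwards [gm_ne_zero hd] with x hx
    by_cases hx2 : x ∈ (((E1 ∪ E2) ∪ E3)ᶜ)
    · rw [Set.indicator_of_mem hx2]
      have h0 : 0 < x ⬝ᵥ x := (dot_self_nonneg x).lt_of_ne fun h => hx (dotProduct_self_eq_zero.1 h.symm)
      simp only [Set.mem_compl_iff, Set.mem_union, not_or, E1, E2, E3, Set.mem_setOf_eq, not_lt, not_le] at hx2
      have b1 := g1_lower x v h0 hx2.2.le hx2.1.1
      have b2 := g1_lower x w h0 hx2.2.le hx2.1.2
      unfold gfun
      nlinarith
    · rw [Set.indicator_of_notMem hx2]; exact gfun_nonneg _ _ _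
  rw [integral_indicator_const _ ((m1.union m2).union m3).compl, hc, smul_eq_mul] at hle
  linarith

lemma expM_g {d : ℕ} (v w : Fin d → ℝ) : ExpM (fun x => gfun v w x - ∫ y, gfun v w y ∂(gm d)) := by
  set c := ∫ y, gfun v w y ∂(gm d) with hc
  have c0 : 0 ≤ c := integral_nonneg fun x => gfun_nonneg _ _ _
  have c1 : c ≤ 1 := by
    have := integral_mono (gfun_int v w) (integrable_const 1) (fun x => gfun_le v w x)
    simpa using this
  have hb : ∀ x, Real.exp (1/40 * |gfun v w x - c|) ≤ 4 := by
    intro x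
    have : 1/40 * |gfun v w x - c| ≤ 1 := by
      have : |gfun v w x - c| ≤ 1 := by
        rw [abs_le]; constructor <;> linarith [gfun_nonneg v w x, gfun_le v w x]
      linarith
    have h := Real.exp_one_lt_d9
    linarith [Real.exp_le_exp.2 this]
  have hm := gfun_meas v w
  have hI : Integrable (fun x => Real.exp (1/40 * |gfun v w x - c|)) (gm d) := by
    refine (integrable_const (4:ℝ)).mono' (by fun_prop) (ae_of_all _ fun x => ?_)
    rw [Real.norm_eq_abs, Real.abs_exp]; exact hb x
  refine ⟨by fun_prop, hI, ?_, ?_⟩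
  · have := integral_mono hI (integrable_const 4) hb
    simpa using this
  · rw [integral_sub (gfun_int v w) (integrable_const _), ← hc]; simp

lemma Un_four {d : ℕ} (hd : 0 < d) (v : Fin d → ℝ) (hv : v ⬝ᵥ v = 1) :
    ∫ x, ((Un x ⬝ᵥ v)^2 - 1/d)^2 ∂(gm d) ≤ 20000/(d:ℝ)^2 := by
  have hd' : (0:ℝ) < d := by positivity
  have hle : ∀ x, ((Un x ⬝ᵥ v)^2 - 1/d)^2 ≤ 6400/(d:ℝ)^2 * Real.exp (1/40 * (d * (Un x ⬝ᵥ v)^2)) := by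
    intro x
    set s := (Un x ⬝ᵥ v)^2
    have hs : 0 ≤ s := sq_nonneg _
    have := Real.quadratic_le_exp_of_nonneg (x := 1/40*(d * s)) (by positivity)
    rw [div_mul_eq_mul_div, le_div_iff₀ (by positivity)]
    have e : (s - 1/d)^2 * (d:ℝ)^2 = (d*s - 1)^2 := by field_simp
    rw [e]
    have : 0 ≤ d * s := by positivity
    nlinarith
  have hm := Un_meas_dot v
  have hI : Integrable (fun x => ((Un x ⬝ᵥ v)^2 - 1/d)^2) (gm d) := by
    refine ((Un_exp_int v hv).const_mul (6400/(d:ℝ)^2)).mono'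
      ((((Un_meas_dot v).pow_const 2).sub_const _).pow_const 2).aestronglyMeasurable (ae_of_all _ fun x => ?_)
    rw [Real.norm_eq_abs, abs_of_nonneg (by positivity)]; exact hle x
  refine (integral_mono hI ((Un_exp_int v hv).const_mul (6400/(d:ℝ)^2)) hle).trans ?_
  rw [integral_const_mul]
  calc _ ≤ 6400/(d:ℝ)^2 * 3 := mul_le_mul_of_nonneg_left (Un_exp v hv) (by positivity)
    _ ≤ _ := by rw [div_mul_eq_mul_div]; gcongr; norm_num

end

section
structure Smp {Ω : Type*} [MeasurableSpace Ω] (P : Measure Ω) {d n : ℕ} (X : Fin n → Ω → Fin d → ℝ) : Prop where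
  meas : ∀ j, Measurable (X j)
  indep : iIndepFun X P
  law : ∀ j, Measure.map (X j) P = gm d

lemma exp_quad (x : ℝ) : Real.exp x ≤ 1 + x + x^2 * Real.exp |x| := by
  have h := Complex.norm_exp_sub_sum_le_norm_mul_exp (x : ℂ) 2
  simp [Finset.sum_range_succ] at h
  have e : ((Complex.exp x - (1 + x) : ℂ)) = ((Real.exp x - (1 + x) : ℝ) : ℂ) := by
    push_cast; rfl
  rw [e, Complex.norm_real, Real.norm_eq_abs] at h
  have := (abs_le.1 h).2
  linarith

lemma mgf_bound {d : ℕ} {f : (Fin d → ℝ) → ℝ} (hf : ExpM f) {l : ℝ} (hl : |l| ≤ 1/80) :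
    Integrable (fun x => Real.exp (l * f x)) (gm d) ∧
    ∫ x, Real.exp (l * f x) ∂(gm d) ≤ Real.exp (51200 * l^2) := by
  obtain ⟨hm, hi, h4, h0⟩ := hf
  have hle0 : ∀ x, Real.exp (l * f x) ≤ Real.exp (1/40*|f x|) := by
    intro x; rw [Real.exp_le_exp]
    have := le_abs_self (l * f x)
    rw [abs_mul] at this
    have := abs_nonneg (f x)
    nlinarith
  have hI : Integrable (fun x => Real.exp (l * f x)) (gm d) := by
    refine hi.mono' (by fun_prop) (ae_of_all _ fun x => ?_)
    rw [Real.norm_eq_abs, Real.abs_exp]; exact hle0 x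
  have hfi : Integrable f (gm d) := by
    refine (hi.const_mul 40).mono' (by fun_prop) (ae_of_all _ fun x => ?_)
    rw [Real.norm_eq_abs]
    have := Real.add_one_le_exp (1/40*|f x|)
    linarith
  have hle : ∀ x, Real.exp (l * f x) ≤ 1 + l * f x + 12800 * l^2 * Real.exp (1/40*|f x|) := by
    intro x
    refine (exp_quad _).trans ?_
    have h1 : (f x)^2 ≤ 12800 * Real.exp (1/80*|f x|) := by
      have := Real.quadratic_le_exp_of_nonneg (x := 1/80*|f x|) (by positivity)
      rw [mul_pow, sq_abs] at this
      have := abs_nonneg (f x)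
      nlinarith
    have h2 : Real.exp |l * f x| ≤ Real.exp (1/80*|f x|) := by
      rw [Real.exp_le_exp, abs_mul]
      exact mul_le_mul_of_nonneg_right hl (abs_nonneg _)
    have h3 : Real.exp (1/40*|f x|) = Real.exp (1/80*|f x|) * Real.exp (1/80*|f x|) := by
      rw [← Real.exp_add]; congr 1; ring
    rw [h3, mul_pow]
    have : (f x)^2 * Real.exp |l * f x| ≤ 12800 * Real.exp (1/80*|f x|) * Real.exp (1/80*|f x|) :=
      mul_le_mul h1 h2 (Real.exp_pos _).le (by positivity)
    nlinarith [mul_le_mul_of_nonneg_left this (sq_nonneg l)]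
  refine ⟨hI, ?_⟩
  have i1 : Integrable (fun x => 1 + l * f x) (gm d) := (integrable_const _).add (hfi.const_mul l)
  have i2 := hi.const_mul (12800 * l^2)
  have := integral_mono hI (i1.add i2) hle
  simp only [Pi.add_apply] at this
  rw [integral_add i1 i2, integral_add (integrable_const _) (hfi.const_mul l),
    integral_const_mul, integral_const_mul, h0] at this
  simp at this
  have h5 := Real.add_one_le_exp (51200 * l^2)
  have : 12800 * l^2 * ∫ x, Real.exp (1/40*|f x|) ∂(gm d) ≤ 12800 * l^2 * 4 :=
    mul_le_mul_of_nonneg_left h4 (by positivity)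
  simp at this
  linarith

lemma ExpM.neg {d : ℕ} {f : (Fin d → ℝ) → ℝ} (hf : ExpM f) : ExpM (fun x => - f x) := by
  obtain ⟨hm, hi, h4, h0⟩ := hf
  refine ⟨hm.neg, by simpa using hi, by simpa using h4, by rw [integral_neg, h0, neg_zero]⟩

lemma conc_one {Ω : Type*} [MeasurableSpace Ω] {P : Measure Ω} [IsProbabilityMeasure P] {d n : ℕ}
    {X : Fin n → Ω → Fin d → ℝ} (hX : Smp P X) {f : (Fin d → ℝ) → ℝ} (hf : ExpM f) {t : ℝ}
    (ht : 0 ≤ t) (ht1 : t ≤ 1280) :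
    P.real {ω | n * t ≤ ∑ j, f (X j ω)} ≤ Real.exp (- (n * t^2) / 204800) := by
  have hm := hf.1
  set l := t / 102400 with hl
  have hl1 : |l| ≤ 1/80 := by rw [abs_of_nonneg (by positivity)]; rw [hl]; linarith
  obtain ⟨hI, hb⟩ := mgf_bound hf hl1
  have hmj : ∀ j, Measurable (fun ω => f (X j ω)) := fun j => hm.comp (hX.meas j)
  have hind : iIndepFun (fun j ω => f (X j ω)) P := hX.indep.comp (fun _ => f) (fun _ => hm)
  have hIj : ∀ j, Integrable (fun ω => Real.exp (l * f (X j ω))) P := by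
    intro j
    have := hI
    rw [← hX.law j, integrable_map_measure (by fun_prop) (hX.meas j).aemeasurable] at this
    exact this
  have hmg : ∀ j, mgf (fun ω => f (X j ω)) P l ≤ Real.exp (51200 * l^2) := by
    intro j
    rw [← hX.law j, integral_map (hX.meas j).aemeasurable (by fun_prop)] at hb
    exact hb
  have hs : mgf (∑ j, fun ω => f (X j ω)) P l ≤ Real.exp (n * (51200 * l^2)) := by
    rw [hind.mgf_sum hmj]
    refine (Finset.prod_le_prod (fun j _ => mgf_nonneg) fun j _ => hmg j).trans ?_
    simp [← Real.exp_nat_mul]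
  have := measure_ge_le_exp_mul_mgf (μ := P) (X := ∑ j, fun ω => f (X j ω)) (n * t) (t := l)
    (by positivity) (hind.integrable_exp_mul_sum hmj fun j _ => hIj j)
  simp only [Finset.sum_apply] at this
  refine this.trans ((mul_le_mul_of_nonneg_left hs (Real.exp_pos _).le).trans ?_)
  rw [← Real.exp_add, Real.exp_le_exp, hl]
  apply le_of_eq; ring

lemma conc {Ω : Type*} [MeasurableSpace Ω] {P : Measure Ω} [IsProbabilityMeasure P] {d n : ℕ}
    {X : Fin n → Ω → Fin d → ℝ} (hX : Smp P X) {f : (Fin d → ℝ) → ℝ} (hf : ExpM f) {t : ℝ}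
    (ht : 0 ≤ t) (ht1 : t ≤ 1280) :
    P.real {ω | n * t ≤ |∑ j, f (X j ω)|} ≤ 2 * Real.exp (- (n * t^2) / 204800) := by
  have h1 := conc_one hX hf ht ht1
  have h2 := conc_one hX hf.neg ht ht1
  have : {ω | n * t ≤ |∑ j, f (X j ω)|} ⊆ {ω | n * t ≤ ∑ j, f (X j ω)} ∪ {ω | n * t ≤ ∑ j, - f (X j ω)} := by
    intro ω hω
    simp only [Finset.sum_neg_distrib]
    have hω' : n * t ≤ |∑ j, f (X j ω)| := hω
    rcases le_abs.1 hω' with h | h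
    · left; exact h
    · right; exact h
  have := (measureReal_mono this (μ := P)).trans (measureReal_union_le _ _)
  linarith

end

section
lemma sum_dev {n d : ℕ} (κ : ℝ) (u : Fin n → Fin d → ℝ) (v : Fin d → ℝ) :
    v ⬝ᵥ ((κ/n) • ∑ j, vecMulVec (u j) (u j) - 1) *ᵥ v = κ/n * ∑ j, (u j ⬝ᵥ v)^2 - v ⬝ᵥ v := by
  have := quad_sum (κ/n) (fun _ => 1) u v v
  simp only [one_smul, one_mul] at this
  rw [Matrix.sub_mulVec, dotProduct_sub, this, Matrix.one_mulVec]
  simp only [sq]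

lemma herm_dev {n d : ℕ} (κ : ℝ) (u : Fin n → Fin d → ℝ) :
    ((κ/n) • ∑ j, vecMulVec (u j) (u j) - 1).IsHermitian := by
  have := isHerm_sum (κ/n) (fun _ => 1) u
  simp only [one_smul] at this
  exact this.sub Matrix.isHermitian_one

lemma five_pow_le (k : ℕ) : (5:ℝ)^k ≤ Real.exp (2*k) := by
  have h1 : (5:ℝ) ≤ Real.exp 2 := by
    have := Real.exp_one_gt_d9
    have e : Real.exp 2 = Real.exp 1 * Real.exp 1 := by rw [← Real.exp_add]; norm_num
    rw [e]; nlinarith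
  calc (5:ℝ)^k ≤ (Real.exp 2)^k := by gcongr
    _ = _ := by rw [← Real.exp_nat_mul]; congr 1; ring

lemma evA {Ω : Type*} [MeasurableSpace Ω] {P : Measure Ω} [IsProbabilityMeasure P] {d n : ℕ}
    {X : Fin n → Ω → Fin d → ℝ} (hX : Smp P X) (hn : 0 < n) (Y : (Fin d → ℝ) → Fin d → ℝ) (κ : ℝ)
    (hY : ∀ v, v ⬝ᵥ v = 1 → ExpM (fun x => κ * (Y x ⬝ᵥ v)^2 - 1)) {η : ℝ} (hη : 0 ≤ η) (hη1 : η ≤ 1)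
    (hηd : η^2 * n = d) :
    P.real {ω | ¬ QB ((κ/n) • ∑ j, vecMulVec (Y (X j ω)) (Y (X j ω)) - 1) (2560 * η)} ≤
      2 * Real.exp (-2*d) := by
  obtain ⟨N, hNc, hN1, hN⟩ := net_sphere d 3
  have hn' : (0:ℝ) < n := by positivity
  have hsub : {ω | ¬ QB ((κ/n) • ∑ j, vecMulVec (Y (X j ω)) (Y (X j ω)) - 1) (2560 * η)} ⊆
      ⋃ y ∈ N, {ω | n * (1280*η) ≤ |∑ j, (κ * (Y (X j ω) ⬝ᵥ y)^2 - 1)|} := by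
    intro ω hω
    by_contra hcon
    refine hω ?_
    rw [show 2560 * η = 2 * (1280*η) by ring]
    refine QB_of_net (herm_dev κ _) (by positivity) N hN1 hN fun y hy => ?_
    rw [sum_dev, hN1 y hy]
    simp only [Set.mem_iUnion, not_exists] at hcon
    have h1 : ¬ (n * (1280*η) ≤ |∑ j, (κ * (Y (X j ω) ⬝ᵥ y)^2 - 1)|) := hcon y hy
    push Not at h1
    have e : κ/n * ∑ j, (Y (X j ω) ⬝ᵥ y)^2 - 1 = (∑ j, (κ * (Y (X j ω) ⬝ᵥ y)^2 - 1))/n := by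
      rw [Finset.sum_sub_distrib, ← Finset.mul_sum]; simp; field_simp
    rw [e, abs_div, abs_of_pos hn', div_le_iff₀ hn']
    linarith
  refine (measureReal_mono hsub (measure_ne_top _ _)).trans ((measureReal_biUnion_finset_le _ _).trans ?_)
  have hb : ∀ y ∈ N, P.real {ω | n * (1280*η) ≤ |∑ j, (κ * (Y (X j ω) ⬝ᵥ y)^2 - 1)|} ≤
      2 * Real.exp (-8 * d) := by
    intro y hy
    refine (conc hX (hY y (hN1 y hy)) (t := 1280 * η) (by positivity) (by linarith)).trans ?_
    apply le_of_eq
    congr 2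
    rw [← hηd]; ring
  refine (Finset.sum_le_sum hb).trans ?_
  rw [Finset.sum_const, nsmul_eq_mul]
  have hc : (N.card : ℝ) ≤ Real.exp (6*d) := by
    have : (N.card : ℝ) ≤ ((5:ℝ)^d)^3 := by exact_mod_cast hNc
    rw [← pow_mul] at this
    refine this.trans ((five_pow_le _).trans (Real.exp_le_exp.2 ?_))
    push_cast; linarith
  calc _ ≤ Real.exp (6*d) * (2 * Real.exp (-8*d)) := by gcongr
    _ = 2 * Real.exp (-2*d) := by
      rw [mul_left_comm, ← Real.exp_add]; congr 2; ring

lemma gfun_lip {d : ℕ} (v w v' w' x : Fin d → ℝ) :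
    gfun v' w' x ≤ gfun v w x + Real.sqrt d * |Un x ⬝ᵥ (v - v')| + Real.sqrt d * |Un x ⬝ᵥ (w - w')| := by
  have key : ∀ a b : Fin d → ℝ, min (Real.sqrt d * |Un x ⬝ᵥ b|) 1 ≤
      min (Real.sqrt d * |Un x ⬝ᵥ a|) 1 + Real.sqrt d * |Un x ⬝ᵥ (a - b)| := by
    intro a b
    have h1 : |Un x ⬝ᵥ b| ≤ |Un x ⬝ᵥ a| + |Un x ⬝ᵥ (a - b)| := by
      have : Un x ⬝ᵥ b = Un x ⬝ᵥ a - Un x ⬝ᵥ (a - b) := by rw [dotProduct_sub]; ring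
      rw [this]; exact abs_sub _ _
    have h2 := mul_le_mul_of_nonneg_left h1 (Real.sqrt_nonneg d)
    have h3 : 0 ≤ Real.sqrt d * |Un x ⬝ᵥ (a - b)| := by positivity
    rcases le_total (Real.sqrt d * |Un x ⬝ᵥ a|) 1 with h | h
    · rw [min_eq_left h]; exact (min_le_left _ _).trans (by linarith)
    · rw [min_eq_right h]; exact (min_le_right _ _).trans (by linarith)
  have k1 := key v v'
  have k2 := key w w'
  unfold gfun
  have a1 : min (Real.sqrt d * |Un x ⬝ᵥ v'|) 1 ≤ 1 := min_le_right _ _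
  have a2 : min (Real.sqrt d * |Un x ⬝ᵥ w|) 1 ≤ 1 := min_le_right _ _
  have b1 : 0 ≤ min (Real.sqrt d * |Un x ⬝ᵥ v'|) 1 := by positivity
  have b2 : 0 ≤ min (Real.sqrt d * |Un x ⬝ᵥ w|) 1 := by positivity
  have h3 : 0 ≤ Real.sqrt d * |Un x ⬝ᵥ (v - v')| := by positivity
  have h4 : 0 ≤ Real.sqrt d * |Un x ⬝ᵥ (w - w')| := by positivity
  nlinarith

lemma gfun_sq {d : ℕ} (v w x : Fin d → ℝ) :
    gfun v w x ^2 ≤ (d:ℝ)^2 * ((Un x ⬝ᵥ v)^2 * (Un x ⬝ᵥ w)^2) := by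
  have : gfun v w x ≤ (Real.sqrt d * |Un x ⬝ᵥ v|) * (Real.sqrt d * |Un x ⬝ᵥ w|) :=
    mul_le_mul (min_le_left _ _) (min_le_left _ _) (by positivity) (by positivity)
  calc _ ≤ ((Real.sqrt d * |Un x ⬝ᵥ v|) * (Real.sqrt d * |Un x ⬝ᵥ w|))^2 :=
        pow_le_pow_left₀ (gfun_nonneg _ _ _) this 2
    _ = (Real.sqrt d ^2)^2 * (|Un x ⬝ᵥ v|^2 * |Un x ⬝ᵥ w|^2) := by ring
    _ = _ := by rw [Real.sq_sqrt (by positivity), sq_abs, sq_abs]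

/-- deterministic part of event (b) -/
lemma detB {n d : ℕ} (hn : 0 < n) (x : Fin n → Fin d → ℝ)
    (hM : ∀ z : Fin d → ℝ, (d:ℝ)/n * ∑ j, (Un (x j) ⬝ᵥ z)^2 ≤ 2 * (z ⬝ᵥ z))
    (N : Finset (Fin d → ℝ))
    (hN : ∀ v : Fin d → ℝ, v ⬝ᵥ v = 1 → ∃ y ∈ N, (v - y) ⬝ᵥ (v - y) ≤ (2 * (1 / 2) ^ 15) ^ 2)
    (hg : ∀ y ∈ N, ∀ y' ∈ N, (n:ℝ) * (1/2000) ≤ ∑ j, gfun y y' (x j)) (v w : Fin d → ℝ) :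
    1/16000000 * (v ⬝ᵥ v) * (w ⬝ᵥ w) ≤ (d:ℝ)^2/n * ∑ j, (Un (x j) ⬝ᵥ v)^2 * (Un (x j) ⬝ᵥ w)^2 := by
  have hn' : (0:ℝ) < n := by positivity
  have hsm : ∀ z : Fin d → ℝ, z ⬝ᵥ z ≤ (2 * (1 / 2) ^ 15) ^ 2 →
      ∑ j, Real.sqrt d * |Un (x j) ⬝ᵥ z| ≤ n * (1/8000) := by
    intro z hz
    have h1 := sq_sum_le_card_mul_sum_sq (s := Finset.univ) (f := fun j => Real.sqrt d * |Un (x j) ⬝ᵥ z|)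
    have h2 : ∑ j, (Real.sqrt d * |Un (x j) ⬝ᵥ z|)^2 = d * ∑ j, (Un (x j) ⬝ᵥ z)^2 := by
      rw [Finset.mul_sum]; refine Finset.sum_congr rfl fun j _ => ?_
      rw [mul_pow, sq_abs, Real.sq_sqrt (by positivity)]
    have h3 := hM z
    rw [div_mul_eq_mul_div, div_le_iff₀ hn'] at h3
    rw [h2] at h1
    simp only [Finset.card_univ, Fintype.card_fin] at h1
    refine abs_le_of_sq_le_sq' ?_ (by positivity) |>.2
    refine h1.trans ?_
    rw [mul_pow, sq (n:ℝ), mul_assoc]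
    refine mul_le_mul_of_nonneg_left (h3.trans ?_) hn'.le
    have : 2 * (z ⬝ᵥ z) ≤ (1/8000)^2 := by
      refine (mul_le_mul_of_nonneg_left hz (by norm_num)).trans ?_; norm_num
    nlinarith
  have unit : ∀ v w : Fin d → ℝ, v ⬝ᵥ v = 1 → w ⬝ᵥ w = 1 →
      1/16000000 ≤ (d:ℝ)^2/n * ∑ j, (Un (x j) ⬝ᵥ v)^2 * (Un (x j) ⬝ᵥ w)^2 := by
    intro v w hv hw
    obtain ⟨y, hy, hy2⟩ := hN v hv
    obtain ⟨y', hy', hy2'⟩ := hN w hw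
    have h1 := hg y hy y' hy'
    have h2 := Finset.sum_le_sum fun j (_ : j ∈ Finset.univ) => gfun_lip v w y y' (x j)
    simp only [Finset.sum_add_distrib] at h2
    have h3 := hsm _ hy2
    have h4 := hsm _ hy2'
    have h5 : n * (1/4000) ≤ ∑ j, gfun v w (x j) := by linarith
    have h6 := sq_sum_le_card_mul_sum_sq (s := Finset.univ) (f := fun j => gfun v w (x j))
    simp only [Finset.card_univ, Fintype.card_fin] at h6
    have h7 := Finset.sum_le_sum fun j (_ : j ∈ Finset.univ) => gfun_sq v w (x j)
    rw [← Finset.mul_sum] at h7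
    have h8 : ((n:ℝ) * (1/4000))^2 ≤ (∑ j, gfun v w (x j))^2 := pow_le_pow_left₀ (by positivity) h5 2
    rw [div_mul_eq_mul_div, le_div_iff₀ hn']
    have h9 : (n:ℝ) * (n * (1/16000000)) ≤ n * ((d:ℝ)^2 * ∑ j, (Un (x j) ⬝ᵥ v)^2 * (Un (x j) ⬝ᵥ w)^2) := by
      calc _ = ((n:ℝ) * (1/4000))^2 := by ring
        _ ≤ _ := h8
        _ ≤ _ := h6
        _ ≤ _ := mul_le_mul_of_nonneg_left h7 hn'.le
    have := le_of_mul_le_mul_left h9 hn'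
    linarith
  rcases eq_or_ne v 0 with rfl | hv
  · simp
  rcases eq_or_ne w 0 with rfl | hw
  · simp
  have h := unit (Un v) (Un w) (Un_self v hv) (Un_self w hw)
  have e : ∀ z : Fin d → ℝ, z ≠ 0 → ∀ q : Fin d → ℝ, (q ⬝ᵥ z)^2 = (z ⬝ᵥ z) * (q ⬝ᵥ Un z)^2 := by
    intro z hz q
    have h0 : z ⬝ᵥ z ≠ 0 := fun h => hz (dotProduct_self_eq_zero.1 h)
    rw [dotProduct_comm q (Un z), Un_dot_sq, dotProduct_comm q z]; field_simp
  have e2 : ∑ j, (Un (x j) ⬝ᵥ v)^2 * (Un (x j) ⬝ᵥ w)^2 =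
      (v ⬝ᵥ v) * (w ⬝ᵥ w) * ∑ j, (Un (x j) ⬝ᵥ Un v)^2 * (Un (x j) ⬝ᵥ Un w)^2 := by
    rw [Finset.mul_sum]; refine Finset.sum_congr rfl fun j _ => ?_
    rw [e v hv, e w hw]; ring
  rw [e2]
  have := mul_le_mul_of_nonneg_left h (mul_nonneg (dot_self_nonneg v) (dot_self_nonneg w))
  linarith

lemma evB {Ω : Type*} [MeasurableSpace Ω] {P : Measure Ω} [IsProbabilityMeasure P] {d n : ℕ}
    {X : Fin n → Ω → Fin d → ℝ} (hX : Smp P X) (hn : 0 < n) (hd : 0 < d) :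
    P.real {ω | (∀ z : Fin d → ℝ, (d:ℝ)/n * ∑ j, (Un (X j ω) ⬝ᵥ z)^2 ≤ 2 * (z ⬝ᵥ z)) ∧
       ¬ ∀ v w : Fin d → ℝ, 1/16000000 * (v ⬝ᵥ v) * (w ⬝ᵥ w) ≤
        (d:ℝ)^2/n * ∑ j, (Un (X j ω) ⬝ᵥ v)^2 * (Un (X j ω) ⬝ᵥ w)^2} ≤
      2 * Real.exp (60*d - n / 10^12) := by
  obtain ⟨N, hNc, hN1, hN⟩ := net_sphere d 15
  set F : ((Fin d → ℝ) × (Fin d → ℝ)) → Set Ω := fun p =>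
    {ω | n * (1/2000) ≤ |∑ j, (gfun p.1 p.2 (X j ω) - ∫ y, gfun p.1 p.2 y ∂(gm d))|} with hF
  have hsub : {ω | (∀ z : Fin d → ℝ, (d:ℝ)/n * ∑ j, (Un (X j ω) ⬝ᵥ z)^2 ≤ 2 * (z ⬝ᵥ z)) ∧
       ¬ ∀ v w : Fin d → ℝ, 1/16000000 * (v ⬝ᵥ v) * (w ⬝ᵥ w) ≤
        (d:ℝ)^2/n * ∑ j, (Un (X j ω) ⬝ᵥ v)^2 * (Un (X j ω) ⬝ᵥ w)^2} ⊆ ⋃ p ∈ N ×ˢ N, F p := by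
    intro ω hω
    by_contra hcon
    refine hω.2 ?_
    refine detB hn (fun j => X j ω) hω.1 N hN fun y hy y' hy' => ?_
    simp only [Set.mem_iUnion, not_exists] at hcon
    have h1 : ¬ (n * (1/2000) ≤ |∑ j, (gfun y y' (X j ω) - ∫ z, gfun y y' z ∂(gm d))|) :=
      hcon (y, y') (Finset.mem_product.2 ⟨hy, hy'⟩)
    push Not at h1
    rw [Finset.sum_sub_distrib] at h1
    have h2 := (abs_lt.1 h1).1
    simp at h2
    have h3 := gfun_lower hd y y' (hN1 y hy) (hN1 y' hy')
    have h4 : (n:ℝ) * (1/1000) ≤ n * ∫ x, gfun y y' x ∂(gm d) := by gcongr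
    linarith
  refine (measureReal_mono hsub (measure_ne_top _ _)).trans ((measureReal_biUnion_finset_le _ _).trans ?_)
  have hb : ∀ p ∈ N ×ˢ N, P.real (F p) ≤ 2 * Real.exp (-(n/10^12)) := by
    intro p hp
    refine (conc hX (expM_g p.1 p.2) (t := 1/2000) (by positivity) (by norm_num)).trans ?_
    gcongr
    have : (0:ℝ) ≤ n := by positivity
    rw [neg_div]
    apply neg_le_neg
    linarith
  refine (Finset.sum_le_sum hb).trans ?_
  rw [Finset.sum_const, nsmul_eq_mul, Finset.card_product]
  have hc : (N.card : ℝ) ≤ Real.exp (30*d) := by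
    have : (N.card : ℝ) ≤ ((5:ℝ)^d)^15 := by exact_mod_cast hNc
    rw [← pow_mul] at this
    refine this.trans ((five_pow_le _).trans (Real.exp_le_exp.2 ?_))
    push_cast; linarith
  push_cast
  calc _ ≤ (Real.exp (30*d) * Real.exp (30*d)) * (2 * Real.exp (-(n/10^12))) := by gcongr
    _ = _ := by
      rw [mul_left_comm, ← Real.exp_add, ← Real.exp_add]; congr 2; ring

end

section
lemma Un_self_le {d : ℕ} (x : Fin d → ℝ) : Un x ⬝ᵥ Un x ≤ 1 := by
  rcases eq_or_ne x 0 with rfl | hx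
  · simp [Un]
  · exact (Un_self x hx).le

noncomputable def Hf {d : ℕ} (y x : Fin d → ℝ) : ℝ := (Un x ⬝ᵥ Un y)^2 - (Un y ⬝ᵥ Un y)/d

lemma Hf_abs {d : ℕ} (y x : Fin d → ℝ) : |Hf y x| ≤ 1 := by
  have h1 := Un_dot_sq_le x (Un y)
  have h2 := Un_self_le y
  have h3 := dot_self_nonneg (Un y)
  have h4 : (Un y ⬝ᵥ Un y)/d ≤ 1 := by
    rcases Nat.eq_zero_or_pos d with rfl | hd
    · simp
    · have : (1:ℝ) ≤ d := by exact_mod_cast hd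
      rw [div_le_one (by positivity)]; linarith
  have h5 : 0 ≤ (Un y ⬝ᵥ Un y)/d := by positivity
  have h6 := sq_nonneg (Un x ⬝ᵥ Un y)
  unfold Hf
  rw [abs_le]; constructor <;> linarith

lemma Hf_meas {α : Type*} [MeasurableSpace α] {d : ℕ} {f g : α → Fin d → ℝ} (hf : Measurable f)
    (hg : Measurable g) : Measurable (fun a => Hf (f a) (g a)) := by
  have h1 : ∀ i, Measurable fun a => Un (f a) i := fun i => (measurable_pi_apply i).comp (Un_meas.comp hf)
  have h2 : ∀ i, Measurable fun a => Un (g a) i := fun i => (measurable_pi_apply i).comp (Un_meas.comp hg)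
  unfold Hf dotProduct
  fun_prop

lemma Hf_int_zero {d : ℕ} (hd : 0 < d) (y : Fin d → ℝ) : ∫ x, Hf y x ∂(gm d) = 0 := by
  unfold Hf
  simp only [sq]
  rw [integral_sub (Un_quad_int _ _) (integrable_const _), Un_cov hd]; simp

lemma Hf_sq {d : ℕ} (hd : 0 < d) (y : Fin d → ℝ) : ∫ x, (Hf y x)^2 ∂(gm d) ≤ 20000/(d:ℝ)^2 := by
  rcases eq_or_ne y 0 with rfl | hy
  · have : ∀ x : Fin d → ℝ, Hf 0 x = 0 := by intro x; simp [Hf, Un]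
    simp [this]; positivity
  · have := Un_four hd (Un y) (Un_self y hy)
    unfold Hf
    rwa [Un_self y hy]

section
variable {Ω : Type*} [MeasurableSpace Ω] {P : Measure Ω} [IsProbabilityMeasure P] {d n : ℕ}
    {X : Fin n → Ω → Fin d → ℝ}

lemma Hf_meas_X (hX : Smp P X) (j k : Fin n) : Measurable (fun ω => Hf (X j ω) (X k ω)) :=
  Hf_meas (hX.meas j) (hX.meas k)

lemma Hf_mul_int (hX : Smp P X) (j k l : Fin n) :
    Integrable (fun ω => Hf (X j ω) (X k ω) * Hf (X j ω) (X l ω)) P := by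
  refine (integrable_const (1:ℝ)).mono' ((Hf_meas_X hX j k).mul (Hf_meas_X hX j l)).aestronglyMeasurable
    (ae_of_all _ fun ω => ?_)
  rw [Real.norm_eq_abs, abs_mul]
  exact mul_le_one₀ (Hf_abs _ _) (abs_nonneg _) (Hf_abs _ _)

lemma Hf_cross (hX : Smp P X) (hd : 0 < d) (j k l : Fin n) (hkj : k ≠ j) (hkl : k ≠ l) :
    ∫ ω, Hf (X j ω) (X k ω) * Hf (X j ω) (X l ω) ∂P = 0 := by
  have hi := hX.indep.indepFun_prodMk hX.meas j l k hkj.symm hkl.symm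
  have hm := (indepFun_iff_map_prod_eq_prod_map_map
    ((hX.meas j).prodMk (hX.meas l)).aemeasurable (hX.meas k).aemeasurable).1 hi
  set G : ((Fin d → ℝ) × (Fin d → ℝ)) × (Fin d → ℝ) → ℝ := fun p => Hf p.1.1 p.2 * Hf p.1.1 p.1.2 with hG
  have hGm : Measurable G := by
    refine Measurable.mul ?_ ?_
    · exact Hf_meas measurable_fst.fst measurable_snd
    · exact Hf_meas measurable_fst.fst measurable_fst.snd
  have h1 := integral_map (μ := P) (((hX.meas j).prodMk (hX.meas l)).prodMk (hX.meas k)).aemeasurable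
    hGm.aestronglyMeasurable
  rw [hm] at h1
  have : IsProbabilityMeasure (P.map fun ω => (X j ω, X l ω)) :=
    Measure.isProbabilityMeasure_map ((hX.meas j).prodMk (hX.meas l)).aemeasurable
  rw [hX.law k, integral_prod] at h1
  · have h2 : ∀ y : (Fin d → ℝ) × (Fin d → ℝ), ∫ x, G (y, x) ∂(gm d) = 0 := by
      intro y
      simp only [hG]
      rw [integral_mul_const, Hf_int_zero hd, zero_mul]
    simp only [h2, integral_zero] at h1
    exact h1.symm
  · refine (integrable_const (1:ℝ)).mono' hGm.aestronglyMeasurable (ae_of_all _ fun p => ?_)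
    rw [Real.norm_eq_abs, abs_mul]
    exact mul_le_one₀ (Hf_abs _ _) (abs_nonneg _) (Hf_abs _ _)

lemma Hf_diag (hX : Smp P X) (hd : 0 < d) (j k : Fin n) (hkj : k ≠ j) :
    ∫ ω, Hf (X j ω) (X k ω) * Hf (X j ω) (X k ω) ∂P ≤ 20000/(d:ℝ)^2 := by
  have hi := hX.indep.indepFun hkj.symm
  have hm := (indepFun_iff_map_prod_eq_prod_map_map (hX.meas j).aemeasurable (hX.meas k).aemeasurable).1 hi
  set G : (Fin d → ℝ) × (Fin d → ℝ) → ℝ := fun p => (Hf p.1 p.2)^2 with hG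
  have hGm : Measurable G := (Hf_meas measurable_fst measurable_snd).pow_const 2
  have h1 := integral_map (μ := P) ((hX.meas j).prodMk (hX.meas k)).aemeasurable
    hGm.aestronglyMeasurable
  have hGi : Integrable G ((gm d).prod (gm d)) := by
    refine (integrable_const (1:ℝ)).mono' hGm.aestronglyMeasurable (ae_of_all _ fun p => ?_)
    rw [Real.norm_eq_abs, abs_pow]
    exact pow_le_one₀ (abs_nonneg _) (Hf_abs _ _)
  rw [hm, hX.law k, hX.law j, integral_prod _ hGi] at h1
  simp only [← sq]
  have h2 : ∫ ω, (Hf (X j ω) (X k ω))^2 ∂P = ∫ y, ∫ x, G (y, x) ∂(gm d) ∂(gm d) := h1.symm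
  rw [h2]
  have := integral_mono hGi.integral_prod_left (integrable_const (20000/(d:ℝ)^2)) (fun y => Hf_sq hd y)
  simpa using this

lemma Hf_sum_sq (hX : Smp P X) (hd : 0 < d) (j : Fin n) :
    ∫ ω, (∑ k, Hf (X j ω) (X k ω))^2 ∂P ≤ 1 + n * (20000/(d:ℝ)^2) := by
  simp only [sq, Finset.sum_mul_sum]
  rw [integral_finsetSum _ fun k _ => integrable_finsetSum _ fun l _ => Hf_mul_int hX j k l]
  have h1 : ∀ k, ∫ ω, ∑ l, Hf (X j ω) (X k ω) * Hf (X j ω) (X l ω) ∂P =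
      ∫ ω, Hf (X j ω) (X k ω) * Hf (X j ω) (X k ω) ∂P := by
    intro k
    rw [integral_finsetSum _ fun l _ => Hf_mul_int hX j k l, Finset.sum_eq_single k]
    · intro l _ hl
      by_cases hk : k = j
      · subst hk
        simp only [mul_comm (Hf (X k _) (X k _))]
        exact Hf_cross hX hd k l k hl hl
      · exact Hf_cross hX hd j k l hk hl.symm
    · simp
  simp only [h1]
  have h2 : ∀ k, ∫ ω, Hf (X j ω) (X k ω) * Hf (X j ω) (X k ω) ∂P ≤
      (if k = j then 1 else 0) + 20000/(d:ℝ)^2 := by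
    intro k
    split_ifs with hk
    · have := integral_mono (Hf_mul_int hX j k k) (integrable_const (1:ℝ)) (fun ω => by
        have := Hf_abs (X j ω) (X k ω)
        have h3 := abs_le.1 this
        show Hf (X j ω) (X k ω) * Hf (X j ω) (X k ω) ≤ 1
        nlinarith [h3.1, h3.2])
      simp at this
      have : (0:ℝ) ≤ 20000/(d:ℝ)^2 := by positivity
      linarith
    · rw [zero_add]; exact Hf_diag hX hd j k hk
  refine (Finset.sum_le_sum fun k _ => h2 k).trans ?_
  rw [Finset.sum_add_distrib]
  simp
  simp [sq]

lemma quad_Hf (hd : 0 < d) (hn : 0 < n) (x : Fin n → Fin d → ℝ) (j : Fin n) :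
    Un (x j) ⬝ᵥ (((d:ℝ)/n) • ∑ k, vecMulVec (Un (x k)) (Un (x k)) - 1) *ᵥ Un (x j) =
      d/n * ∑ k, Hf (x j) (x k) := by
  rw [sum_dev]
  unfold Hf
  rw [Finset.sum_sub_distrib, mul_sub]
  simp
  field_simp

noncomputable def zsq (x : Fin n → Fin d → ℝ) : ℝ :=
  (d:ℝ)/n * ∑ j, (Un (x j) ⬝ᵥ (((d:ℝ)/n) • ∑ k, vecMulVec (Un (x k)) (Un (x k)) - 1) *ᵥ Un (x j))^2

lemma evC (hX : Smp P X) (hd : 0 < d) (hn : 0 < n) (δ : ℝ) (hδ : 0 < δ) :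
    P.real {ω | δ * ((d:ℝ)/n * d) ≤ zsq (fun j => X j ω)} ≤ ((d:ℝ)/n + 20000/d) / δ := by
  have hd' : (0:ℝ) < d := by positivity
  have hn' : (0:ℝ) < n := by positivity
  have hz : ∀ ω, zsq (fun j => X j ω) = ((d:ℝ)/n)^3 * ∑ j, (∑ k, Hf (X j ω) (X k ω))^2 := by
    intro ω
    unfold zsq
    simp only [quad_Hf hd hn (fun j => X j ω), mul_pow]
    rw [← Finset.mul_sum]; ring
  have hi1 : ∀ j, Integrable (fun ω => (∑ k, Hf (X j ω) (X k ω))^2) P := by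
    intro j
    simp only [sq, Finset.sum_mul_sum]
    exact integrable_finsetSum _ fun k _ => integrable_finsetSum _ fun l _ => Hf_mul_int hX j k l
  have hi : Integrable (fun ω => zsq (fun j => X j ω)) P := by
    simp only [hz]
    exact (integrable_finsetSum _ fun j _ => hi1 j).const_mul _
  have hE : ∫ ω, zsq (fun j => X j ω) ∂P ≤ ((d:ℝ)/n * d) * ((d:ℝ)/n + 20000/d) := by
    simp only [hz]
    rw [integral_const_mul, integral_finsetSum _ fun j _ => hi1 j]
    have := Finset.sum_le_sum fun j (_ : j ∈ Finset.univ) => Hf_sum_sq hX hd j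
    simp only [Finset.sum_const, Finset.card_univ, Fintype.card_fin, nsmul_eq_mul] at this
    refine (mul_le_mul_of_nonneg_left this (by positivity)).trans (le_of_eq ?_)
    field_simp
  have hM := mul_meas_ge_le_integral_of_nonneg (μ := P) (f := fun ω => zsq (fun j => X j ω))
    (ae_of_all _ fun ω => by unfold zsq; positivity) hi (δ * ((d:ℝ)/n * d))
  rw [le_div_iff₀ hδ]
  have h0 : (0:ℝ) < d/n*d := by positivity
  have := hM.trans hE
  refine le_of_mul_le_mul_left ?_ h0
  linarith
end

end

section
noncomputable def hkl {d : ℕ} (k l : Fin d) (x : Fin d → ℝ) : ℝ := ((d:ℝ) - x ⬝ᵥ x) * (Un x k * Un x l)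

lemma Un_mul_self {d : ℕ} (x : Fin d → ℝ) (k l : Fin d) : (x ⬝ᵥ x) * (Un x k * Un x l) = x k * x l := by
  rcases eq_or_ne x 0 with rfl | hx
  · simp
  · have h : 0 < x ⬝ᵥ x := (dot_self_nonneg x).lt_of_ne fun h => hx (dotProduct_self_eq_zero.1 h.symm)
    rw [Un_apply, Un_apply]
    have e : (Real.sqrt (x ⬝ᵥ x))⁻¹ * (Real.sqrt (x ⬝ᵥ x))⁻¹ = (x ⬝ᵥ x)⁻¹ := by
      rw [← mul_inv, Real.mul_self_sqrt h.le]
    calc _ = (x ⬝ᵥ x) * ((Real.sqrt (x ⬝ᵥ x))⁻¹ * (Real.sqrt (x ⬝ᵥ x))⁻¹) * (x k * x l) := by ring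
      _ = _ := by rw [e, mul_inv_cancel₀ h.ne', one_mul]

lemma hkl_meas {d : ℕ} (k l : Fin d) : Measurable (hkl k l) := by
  have h : ∀ i, Measurable fun x : Fin d → ℝ => Un x i := fun i => (measurable_pi_apply i).comp Un_meas
  have := meas_self (d := d)
  unfold hkl; fun_prop

lemma hkl_mem {d : ℕ} (k l : Fin d) : MemLp (hkl k l) 2 (gm d) := by
  have := (gm_self_mem d)
  rw [gm_self_fun] at this
  refine ((memLp_const (d:ℝ)).sub this).mono (hkl_meas k l).aestronglyMeasurable (ae_of_all _ fun x => ?_)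
  rw [Real.norm_eq_abs, Real.norm_eq_abs]
  unfold hkl
  rw [abs_mul]
  refine mul_le_of_le_one_right (abs_nonneg _) ?_
  rw [abs_mul]
  exact mul_le_one₀ (Un_coord_sq_le x k) (abs_nonneg _) (Un_coord_sq_le x l)

lemma gm_coord_mul {d : ℕ} (k l : Fin d) : Integrable (fun x : Fin d → ℝ => x k * x l) (gm d) ∧
    ∫ x : Fin d → ℝ, x k * x l ∂(gm d) = if k = l then 1 else 0 := by
  have hc : ∀ i, ∀ v : Fin d → ℝ, v = Pi.single i 1 → True := fun _ _ _ => trivial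
  have hm : ∀ i : Fin d, MemLp (fun x : Fin d → ℝ => x i) 2 (gm d) := by
    intro i
    exact IsGaussian.memLp_two_id.comp_measurePreserving (measurePreserving_eval (fun _ : Fin d => gaussianReal 0 1) i)
  have hI : Integrable (fun x : Fin d → ℝ => x k * x l) (gm d) := (hm k).integrable_mul (hm l)
  refine ⟨hI, ?_⟩
  split_ifs with h
  · subst h
    have := gm_sq (Pi.single k (1:ℝ) : Fin d → ℝ) (by simp)
    simpa [sq] using this
  · have hp : MeasurePreserving (fun (x : Fin d → ℝ) i => if i = k then - x i else x i) (gm d) (gm d) := by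
      refine measurePreserving_pi (f := fun i y => if i = k then - y else y) _ _ fun i => ?_
      by_cases hk : i = k
      · simp only [hk, if_true]
        exact ⟨measurable_neg, by simpa using gaussianReal_map_neg (μ := 0) (v := 1)⟩
      · simp only [hk, if_false]; exact MeasurePreserving.id _
    have h2 := integral_map hp.measurable.aemeasurable (f := fun x : Fin d → ℝ => x k * x l)
      (by rw [hp.map_eq]; exact hI.aestronglyMeasurable)
    rw [hp.map_eq] at h2
    simp only [if_true, if_neg (Ne.symm h), neg_mul] at h2
    rw [integral_neg] at h2
    linarith

lemma hkl_mean {d : ℕ} (hd : 0 < d) (k l : Fin d) : ∫ x, hkl k l x ∂(gm d) = 0 := by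
  have e : ∀ x : Fin d → ℝ, hkl k l x = d * (Un x k * Un x l) - x k * x l := by
    intro x; rw [hkl, sub_mul, Un_mul_self]
  simp only [e]
  rw [integral_sub ((Un_int k l).const_mul _) (gm_coord_mul k l).1, (gm_coord_mul k l).2, integral_const_mul]
  split_ifs with h
  · subst h; rw [Un_diag_val hd]; field_simp; simp
  · rw [Un_off k l h]; simp

lemma hkl_sum {d : ℕ} : ∑ k : Fin d, ∑ l : Fin d, ∫ x, (hkl k l x)^2 ∂(gm d) ≤ d * gvar := by
  have hi : ∀ k l : Fin d, Integrable (fun x => (hkl k l x)^2) (gm d) := fun k l => (hkl_mem k l).integrable_sq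
  simp only [← integral_finsetSum _ fun l _ => hi _ l]
  rw [← integral_finsetSum _ fun k _ => integrable_finsetSum _ fun l _ => hi k l, ← gm_self_var]
  refine integral_mono (integrable_finsetSum _ fun k _ => integrable_finsetSum _ fun l _ => hi k l)
    (gm_self_sq_int d) fun x => ?_
  have : ∑ k : Fin d, ∑ l : Fin d, (hkl k l x)^2 = ((d:ℝ) - x ⬝ᵥ x)^2 * ((Un x ⬝ᵥ Un x) * (Un x ⬝ᵥ Un x)) := by
    unfold hkl
    rw [show (Un x ⬝ᵥ Un x) * (Un x ⬝ᵥ Un x) = ∑ k, ∑ l, (Un x k * Un x k) * (Un x l * Un x l) by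
      simp only [dotProduct]; rw [Finset.sum_mul_sum]]
    simp only [Finset.mul_sum]
    refine Finset.sum_congr rfl fun k _ => Finset.sum_congr rfl fun l _ => ?_
    ring
  simp only [this]
  have h1 := Un_self_le x
  have h2 := dot_self_nonneg (Un x)
  exact mul_le_of_le_one_right (sq_nonneg _) (mul_le_one₀ h1 h2 h1)

section
variable {Ω : Type*} [MeasurableSpace Ω] {P : Measure Ω} [IsProbabilityMeasure P] {d n : ℕ}
    {X : Fin n → Ω → Fin d → ℝ}

noncomputable def dsq (x : Fin n → Fin d → ℝ) : ℝ :=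
  fsq (((d:ℝ)/n) • ∑ j, vecMulVec (Un (x j)) (Un (x j)) - (n:ℝ)⁻¹ • ∑ j, vecMulVec (x j) (x j))

lemma dsq_eq (x : Fin n → Fin d → ℝ) :
    dsq x = ((n:ℝ)⁻¹)^2 * ∑ k, ∑ l, (∑ j, hkl k l (x j))^2 := by
  unfold dsq fsq
  simp only [Finset.mul_sum]
  refine Finset.sum_congr rfl fun k _ => Finset.sum_congr rfl fun l _ => ?_
  rw [← mul_pow]; congr 1
  simp only [Matrix.sub_apply, Matrix.smul_apply, Matrix.sum_apply, vecMulVec_apply, smul_eq_mul]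
  rw [div_eq_inv_mul, mul_assoc, ← mul_sub, Finset.mul_sum, ← Finset.sum_sub_distrib]
  congr 1
  refine Finset.sum_congr rfl fun j _ => ?_
  rw [hkl, sub_mul, Un_mul_self]

lemma hkl_sum_sq (hX : Smp P X) (hd : 0 < d) (k l : Fin d) :
    Integrable (fun ω => (∑ j, hkl k l (X j ω))^2) P ∧
    ∫ ω, (∑ j, hkl k l (X j ω))^2 ∂P = n * ∫ x, (hkl k l x)^2 ∂(gm d) := by
  have hm := hkl_meas k l
  have hmem : ∀ j, MemLp (fun ω => hkl k l (X j ω)) 2 P := by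
    intro j
    have := hkl_mem k l
    rw [← hX.law j, memLp_map_measure_iff hm.aestronglyMeasurable (hX.meas j).aemeasurable] at this
    exact this
  have hmean : ∀ j, ∫ ω, hkl k l (X j ω) ∂P = 0 := by
    intro j
    have := hkl_mean hd k l
    rwa [← hX.law j, integral_map (hX.meas j).aemeasurable hm.aestronglyMeasurable] at this
  have hsq : ∀ j, ∫ ω, (hkl k l (X j ω))^2 ∂P = ∫ x, (hkl k l x)^2 ∂(gm d) := by
    intro j
    rw [← hX.law j, integral_map (hX.meas j).aemeasurable (hm.pow_const 2).aestronglyMeasurable]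
  have hind : iIndepFun (fun j ω => hkl k l (X j ω)) P := hX.indep.comp (fun _ => hkl k l) (fun _ => hm)
  have hvs := IndepFun.variance_sum (μ := P) (X := fun j ω => hkl k l (X j ω)) (s := Finset.univ)
    (fun j _ => hmem j) (fun i _ j _ hij => hind.indepFun hij)
  have hSm : MemLp (∑ j, fun ω => hkl k l (X j ω)) 2 P := memLp_finsetSum' _ fun j _ => hmem j
  have hS0 : ∫ ω, (∑ j, fun ω => hkl k l (X j ω)) ω ∂P = 0 := by
    simp only [Finset.sum_apply]
    rw [integral_finsetSum _ fun j _ => (hmem j).integrable (by norm_num)]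
    simp [hmean]
  have hi := hSm.integrable_sq
  rw [variance_of_integral_eq_zero hSm.aemeasurable hS0] at hvs
  simp only [Finset.sum_apply] at hvs hi
  refine ⟨hi, ?_⟩
  rw [hvs]
  rw [Finset.sum_congr rfl fun j _ => variance_of_integral_eq_zero (hmem j).aemeasurable (hmean j)]
  simp only [hsq]
  simp

lemma evD (hX : Smp P X) (hd : 0 < d) (hn : 0 < n) (δ : ℝ) (hδ : 0 < δ) :
    P.real {ω | δ * ((d:ℝ)/n * d) ≤ dsq (fun j => X j ω)} ≤ gvar / d / δ := by
  have hd' : (0:ℝ) < d := by positivity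
  have hn' : (0:ℝ) < n := by positivity
  have hi : Integrable (fun ω => dsq (fun j => X j ω)) P := by
    simp only [dsq_eq]
    exact (integrable_finsetSum _ fun k _ => integrable_finsetSum _ fun l _ => (hkl_sum_sq hX hd k l).1).const_mul _
  have hE : ∫ ω, dsq (fun j => X j ω) ∂P ≤ ((d:ℝ)/n * d) * (gvar / d) := by
    simp only [dsq_eq]
    rw [integral_const_mul, integral_finsetSum _ fun k _ => integrable_finsetSum _ fun l _ => (hkl_sum_sq hX hd k l).1]
    rw [Finset.sum_congr rfl fun k _ => integral_finsetSum _ fun l _ => (hkl_sum_sq hX hd k l).1]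
    rw [Finset.sum_congr rfl fun k _ => Finset.sum_congr rfl fun l _ => (hkl_sum_sq hX hd k l).2]
    simp only [← Finset.mul_sum]
    calc _ ≤ ((n:ℝ)⁻¹)^2 * (n * (d * gvar)) := by gcongr; exact hkl_sum
      _ = _ := by field_simp
  have hM := mul_meas_ge_le_integral_of_nonneg (μ := P) (f := fun ω => dsq (fun j => X j ω))
    (ae_of_all _ fun ω => fsq_nonneg _) hi (δ * ((d:ℝ)/n * d))
  rw [le_div_iff₀ hδ]
  have h0 : (0:ℝ) < d/n*d := by positivity
  have := hM.trans hE
  refine le_of_mul_le_mul_left ?_ h0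
  linarith
end

end

section
lemma isTyler_Un {d n : ℕ} (x : Fin n → Fin d → ℝ) (hx : ∀ j, x j ≠ 0) (T : Matrix (Fin d) (Fin d) ℝ)
    (hT : IsTyler x T) : IsTyler (fun j => Un (x j)) T := by
  obtain ⟨h1, h2, h3⟩ := hT
  refine ⟨h1, h2, h3.trans ?_⟩
  congr 1
  refine Finset.sum_congr rfl fun j _ => ?_
  have hp : 0 < x j ⬝ᵥ x j := (dot_self_nonneg (x j)).lt_of_ne fun h => hx j (dotProduct_self_eq_zero.1 h.symm)
  have hr : (Real.sqrt (x j ⬝ᵥ x j)) ≠ 0 := (Real.sqrt_pos.2 hp).ne'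
  show _ = (((Real.sqrt (x j ⬝ᵥ x j))⁻¹ • x j) ⬝ᵥ T⁻¹ *ᵥ ((Real.sqrt (x j ⬝ᵥ x j))⁻¹ • x j))⁻¹ •
    vecMulVec ((Real.sqrt (x j ⬝ᵥ x j))⁻¹ • x j) ((Real.sqrt (x j ⬝ᵥ x j))⁻¹ • x j)
  generalize Real.sqrt (x j ⬝ᵥ x j) = r at hr
  rw [Matrix.mulVec_smul, smul_dotProduct, dotProduct_smul, smul_vecMulVec, vecMulVec_smul]
  simp only [smul_smul, smul_eq_mul]
  congr 1
  rw [mul_inv, mul_inv, inv_inv]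
  field_simp

lemma QB_smul {d : ℕ} {A : Matrix (Fin d) (Fin d) ℝ} {t : ℝ} (h : QB A t) (r : ℝ) (hr : 0 ≤ r) :
    QB (r • A) (r * t) := by
  intro v
  rw [smul_mulVec, dotProduct_smul, smul_eq_mul, abs_mul, abs_of_nonneg hr, mul_assoc]
  exact mul_le_mul_of_nonneg_left (h v) hr

lemma QB_mono {d : ℕ} {A : Matrix (Fin d) (Fin d) ℝ} {t s : ℝ} (h : QB A t) (hts : t ≤ s) : QB A s :=
  fun v => (h v).trans (mul_le_mul_of_nonneg_right hts (dot_self_nonneg v))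

lemma det_main {d n : ℕ} (hd : 0 < d) (hn : 0 < n) (m : ℕ) {η δ : ℝ} (hη : 0 < η)
    (hηd : η^2 = (d:ℝ)/n) (hηs : 163840000000 * η ≤ 1/2) (x : Fin n → Fin d → ℝ) (hx : ∀ j, x j ≠ 0)
    (T : Matrix (Fin d) (Fin d) ℝ) (hT : IsTyler x T)
    (hA : QB (((d:ℝ)/n) • ∑ j, vecMulVec (Un (x j)) (Un (x j)) - 1) (2560 * η))
    (hA' : QB (((1:ℝ)/n) • ∑ j, vecMulVec (x j) (x j) - 1) (2560 * η))
    (hb : ∀ v w : Fin d → ℝ, 1/16000000 * (v ⬝ᵥ v) * (w ⬝ᵥ w) ≤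
        (d:ℝ)^2/n * ∑ j, (Un (x j) ⬝ᵥ v)^2 * (Un (x j) ⬝ᵥ w)^2)
    (hC : zsq x ≤ δ * ((d:ℝ)/n * d)) (hD : dsq x ≤ δ * ((d:ℝ)/n * d)) :
    |(1 / (d : ℝ)) * ((Real.sqrt ((n : ℝ) / d) • (T - 1)) ^ m).trace -
      (1 / (d : ℝ)) * ((Real.sqrt ((n : ℝ) / d) •
        ((n : ℝ)⁻¹ • ∑ j : Fin n, vecMulVec (x j) (x j) - 1)) ^ m).trace| ≤
      m * 163840000000^(m-1) * Real.sqrt ((2*(1440*16000000^2)+2) * δ + 2*(1440*16000000^2)*163840000000^4*η^2) := by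
  have hd' : (0:ℝ) < d := by positivity
  have hn' : (0:ℝ) < n := by positivity
  have hs : Real.sqrt ((n:ℝ)/d) = η⁻¹ := by
    rw [← inv_div, ← hηd, Real.sqrt_inv, Real.sqrt_sq hη.le]
  rw [hs]
  rw [one_div (n:ℝ)] at hA'
  have hTU := isTyler_Un x hx T hT
  have hM : ∀ v : Fin d → ℝ, |(d : ℝ) / n * ∑ j, (Un (x j) ⬝ᵥ v) ^ 2 - v ⬝ᵥ v| ≤ (2560*η) * (v ⬝ᵥ v) := by
    intro v
    rw [← sum_dev]; exact hA v
  obtain ⟨hq1, hq2⟩ := tyler_op hd (c := 1/16000000) (t := 2560*η) (by norm_num) (by positivity)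
    (by linarith) (fun j => Un (x j)) (fun j => Un_self _ (hx j)) hb hM T hTU
  have es : 4 * (2560*η) / (1/16000000) = 163840000000 * η := by ring
  rw [es] at hq1 hq2
  have hf := tyler_fro hd (c := 1/16000000) (t := 2560*η) (s := 163840000000 * η) (by norm_num) (by norm_num)
    (by positivity) (by linarith) (by positivity) hηs (fun j => Un (x j)) (fun j => Un_self _ (hx j)) hb hM T hTU
    hq1 hq2 _ rfl
  set M := ((d:ℝ)/n) • ∑ j, vecMulVec (Un (x j)) (Un (x j)) with hMd
  set S := (n:ℝ)⁻¹ • ∑ j, vecMulVec (x j) (x j) with hSd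
  have hz : (d:ℝ)/n * ∑ j, (Un (x j) ⬝ᵥ (M - 1) *ᵥ Un (x j))^2 = zsq x := rfl
  have hds : dsq x = fsq (M - S) := rfl
  rw [hz] at hf
  have hTS : fsq (T - S) ≤ ((2*(1440*16000000^2)+2) * δ + 2*(1440*16000000^2)*163840000000^4*η^2) * (η^2 * d) := by
    have h1 := fsq_add_le (T - M) (M - S)
    rw [sub_add_sub_cancel] at h1
    rw [← hds] at h1
    rw [← hηd] at hC hD
    have h2 : fsq (T - M) ≤ 1440*16000000^2 * (δ * (η^2*d) + (163840000000 * η)^4 * d) := by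
      refine hf.trans ?_
      rw [show (1440:ℝ) / (1/16000000)^2 = 1440*16000000^2 by norm_num]
      gcongr
    calc fsq (T - S) ≤ 2 * (1440*16000000^2 * (δ * (η^2*d) + (163840000000 * η)^4 * d)) + 2 * (δ * (η^2*d)) := by
          linarith
      _ = _ := by ring
  have hK : ∀ A : Matrix (Fin d) (Fin d) ℝ, A.IsHermitian → QB A (163840000000*η) →
      OB (η⁻¹ • A) 163840000000 := by
    intro A hA hq
    refine QB_mulVec ?_ (by norm_num) ?_
    · unfold Matrix.IsHermitian at hA ⊢
      rw [Matrix.conjTranspose_smul, hA]; simp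
    · have := QB_smul hq η⁻¹ (by positivity)
      rwa [show η⁻¹ * (163840000000*η) = 163840000000 by field_simp] at this
  have o1 := hK (T - 1) (hT.1.isHermitian.sub Matrix.isHermitian_one) hq1
  have hSh : (S - 1).IsHermitian := by
    have := herm_dev 1 x
    rwa [one_div] at this
  have o2 := hK (S - 1) hSh (QB_mono hA' (by nlinarith))
  have key := trace_pow_sub_le (by norm_num) o1 o2 m
  rw [← smul_sub, sub_sub_sub_cancel_right, fsq_smul] at key
  rw [← mul_sub, abs_mul, abs_of_pos (by positivity)]
  set R := (2*(1440*16000000^2)+2) * δ + 2*(1440*16000000^2)*163840000000^4*η^2 with hR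
  have hsq : Real.sqrt (d * (η⁻¹^2 * fsq (T - S))) ≤ d * Real.sqrt R := by
    have : (d:ℝ) * (η⁻¹^2 * fsq (T - S)) ≤ (d:ℝ)^2 * R := by
      calc (d:ℝ) * (η⁻¹^2 * fsq (T - S)) ≤ (d:ℝ) * (η⁻¹^2 * (R * (η^2*d))) := by gcongr
        _ = _ := by field_simp
    refine (Real.sqrt_le_sqrt this).trans ?_
    rw [Real.sqrt_mul (by positivity), Real.sqrt_sq hd'.le]
  calc 1 / (d:ℝ) * _ ≤ 1 / (d:ℝ) * (m * 163840000000^(m-1) * (d * Real.sqrt R)) := by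
        refine mul_le_mul_of_nonneg_left (key.trans ?_) (by positivity)
        exact mul_le_mul_of_nonneg_left hsq (by positivity)
    _ = _ := by field_simp

end

section
lemma prob_main {Ω : Type*} [MeasurableSpace Ω] {P : Measure Ω} [IsProbabilityMeasure P] {d n : ℕ}
    {X : Fin n → Ω → Fin d → ℝ} (hX : Smp P X) (hn : 0 < n) (hd : 0 < d) (m : ℕ) {η δ ε : ℝ} (hη : 0 < η)
    (hδ : 0 < δ)
    (hηd : η^2 = (d:ℝ)/n) (hηs : 163840000000 * η ≤ 1/2)
    (T : Ω → Matrix (Fin d) (Fin d) ℝ) (hT : ∀ᵐ ω ∂P, IsTyler (fun j => X j ω) (T ω))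
    (hε : m * 163840000000^(m-1) * Real.sqrt ((2*(1440*16000000^2)+2) * δ + 2*(1440*16000000^2)*163840000000^4*η^2) ≤ ε) :
    P {ω | |(1 / (d : ℝ)) * ((Real.sqrt ((n : ℝ) / d) • (T ω - 1)) ^ m).trace -
      (1 / (d : ℝ)) * ((Real.sqrt ((n : ℝ) / d) •
        ((n : ℝ)⁻¹ • ∑ j : Fin n, vecMulVec (X j ω) (X j ω) - 1)) ^ m).trace| > ε} ≤
    ENNReal.ofReal (2 * Real.exp (-2*d) + 2 * Real.exp (-2*d) + 2 * Real.exp (60*d - n / 10^12) +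
      ((d:ℝ)/n + 20000/d) / δ + gvar / d / δ) := by
  have hd' : (0:ℝ) < d := by positivity
  have hn' : (0:ℝ) < n := by positivity
  have hηn : η^2 * n = d := by rw [hηd]; field_simp
  have e1 := evA hX hn Un (d:ℝ) (fun v hv => expM_U hd v hv) hη.le (by linarith) hηn
  have e2 := evA hX hn (fun x => x) (1:ℝ) (fun v hv => by simpa using expM_X v hv) hη.le (by linarith) hηn
  have e3 := evB hX hn hd
  have e4 := evC hX hd hn δ hδ
  have e5 := evD hX hd hn δ hδ
  set A1 := {ω | ¬ QB (((d:ℝ)/n) • ∑ j, vecMulVec (Un (X j ω)) (Un (X j ω)) - 1) (2560 * η)} with hA1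
  set A2 := {ω | ¬ QB (((1:ℝ)/n) • ∑ j, vecMulVec ((fun x => x) (X j ω)) ((fun x => x) (X j ω)) - 1) (2560 * η)} with hA2
  set A3 := {ω | (∀ z : Fin d → ℝ, (d:ℝ)/n * ∑ j, (Un (X j ω) ⬝ᵥ z)^2 ≤ 2 * (z ⬝ᵥ z)) ∧
       ¬ ∀ v w : Fin d → ℝ, 1/16000000 * (v ⬝ᵥ v) * (w ⬝ᵥ w) ≤
        (d:ℝ)^2/n * ∑ j, (Un (X j ω) ⬝ᵥ v)^2 * (Un (X j ω) ⬝ᵥ w)^2} with hA3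
  set A4 := {ω | δ * ((d:ℝ)/n * d) ≤ zsq (fun j => X j ω)} with hA4
  set A5 := {ω | δ * ((d:ℝ)/n * d) ≤ dsq (fun j => X j ω)} with hA5
  have hne : ∀ᵐ ω ∂P, ∀ j, X j ω ≠ 0 := by
    rw [ae_all_iff]
    intro j
    have := gm_ne_zero hd
    rw [← hX.law j] at this
    exact ae_of_ae_map (hX.meas j).aemeasurable this
  calc P _ ≤ P (A1 ∪ A2 ∪ A3 ∪ A4 ∪ A5) := by
        refine measure_mono_ae ?_
        filter_upwards [hne, hT] with ω h1 h2
        intro hω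
        have hω' : |(1 / (d : ℝ)) * ((Real.sqrt ((n : ℝ) / d) • (T ω - 1)) ^ m).trace -
          (1 / (d : ℝ)) * ((Real.sqrt ((n : ℝ) / d) •
          ((n : ℝ)⁻¹ • ∑ j : Fin n, vecMulVec (X j ω) (X j ω) - 1)) ^ m).trace| > ε := hω
        by_contra hcon
        have hcon' : ω ∉ A1 ∪ A2 ∪ A3 ∪ A4 ∪ A5 := hcon
        simp only [Set.mem_union, not_or] at hcon'
        obtain ⟨⟨⟨⟨n1, n2⟩, n3⟩, n4⟩, n5⟩ := hcon'
        have q1 : QB (((d:ℝ)/n) • ∑ j, vecMulVec (Un (X j ω)) (Un (X j ω)) - 1) (2560 * η) := not_not.1 n1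
        have q2 : QB (((1:ℝ)/n) • ∑ j, vecMulVec (X j ω) (X j ω) - 1) (2560 * η) := not_not.1 n2
        have q3 : ∀ v w : Fin d → ℝ, 1/16000000 * (v ⬝ᵥ v) * (w ⬝ᵥ w) ≤
            (d:ℝ)^2/n * ∑ j, (Un (X j ω) ⬝ᵥ v)^2 * (Un (X j ω) ⬝ᵥ w)^2 := by
          by_contra h
          refine n3 ⟨fun z => ?_, h⟩
          have := q1 z
          rw [sum_dev] at this
          have h0 := dot_self_nonneg z
          have := (abs_le.1 this).2
          nlinarith
        have q4 : ¬ (δ * ((d:ℝ)/n * d) ≤ zsq (fun j => X j ω)) := n4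
        have q5 : ¬ (δ * ((d:ℝ)/n * d) ≤ dsq (fun j => X j ω)) := n5
        have := det_main hd hn m hη hηd hηs (fun j => X j ω) h1 (T ω) h2 q1 q2 q3 (not_le.1 q4).le (not_le.1 q5).le
        exact absurd hω' (not_lt.2 (this.trans hε))
    _ = ENNReal.ofReal (P.real (A1 ∪ A2 ∪ A3 ∪ A4 ∪ A5)) := by
        rw [ofReal_measureReal]
    _ ≤ _ := by
        refine ENNReal.ofReal_le_ofReal ?_
        have u1 := measureReal_union_le (μ := P) A1 A2
        have u2 := measureReal_union_le (μ := P) (A1 ∪ A2) A3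
        have u3 := measureReal_union_le (μ := P) (A1 ∪ A2 ∪ A3) A4
        have u4 := measureReal_union_le (μ := P) (A1 ∪ A2 ∪ A3 ∪ A4) A5
        linarith

lemma final_main
    {Ωs : Type*} [MeasurableSpace Ωs] (P : Measure Ωs) [IsProbabilityMeasure P]
    (n : ℕ → ℕ) (hn : Tendsto n atTop atTop)
    (hdn : Tendsto (fun d : ℕ => (d : ℝ) / (n d : ℝ)) atTop (nhds 0))
    (X : ∀ d : ℕ, Fin (n d) → Ωs → Fin d → ℝ)
    (hX : ∀ d, Smp P (X d))
    (T : ∀ d : ℕ, Ωs → Matrix (Fin d) (Fin d) ℝ)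
    (hT : ∀ d, ∀ᵐ ω ∂P, IsTyler (fun j => X d j ω) (T d ω))
    (m : ℕ) (hm : 1 ≤ m) (ε : ℝ) (hε : 0 < ε) :
      Tendsto (fun d : ℕ =>
          P {ω | |(1 / (d : ℝ)) * ((Real.sqrt ((n d : ℝ) / d) • (T d ω - 1)) ^ m).trace -
                 (1 / (d : ℝ)) * ((Real.sqrt ((n d : ℝ) / d) •
                   ((n d : ℝ)⁻¹ • ∑ j : Fin (n d),
                     vecMulVec (X d j ω) (X d j ω) - 1)) ^ m).trace| > ε})
        atTop (nhds 0) := by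
  have hm' : (0:ℝ) < m := by positivity
  obtain ⟨L, hL0, hL⟩ : ∃ L : ℝ, 0 < L ∧ L = m * 163840000000^(m-1) := ⟨_, by positivity, rfl⟩
  obtain ⟨θ, hθ0, hθ⟩ : ∃ θ : ℝ, 0 < θ ∧ θ = (ε/L)^2 := ⟨_, by positivity, rfl⟩
  obtain ⟨δ, hδ0, hδ⟩ : ∃ δ : ℝ, 0 < δ ∧ δ = θ / 2 / (2*(1440*16000000^2)+2) := ⟨_, by positivity, rfl⟩
  have ex : Tendsto (fun d : ℕ => Real.exp (-2*(d:ℝ))) atTop (nhds 0) := by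
    refine Real.tendsto_exp_atBot.comp ?_
    exact tendsto_natCast_atTop_atTop.const_mul_atTop_of_neg (by norm_num)
  have iv : ∀ a : ℝ, Tendsto (fun d : ℕ => a / (d:ℝ)) atTop (nhds 0) := fun a =>
    tendsto_const_nhds.div_atTop tendsto_natCast_atTop_atTop
  have hlim : Tendsto (fun d : ℕ => ENNReal.ofReal (2 * Real.exp (-2*(d:ℝ)) + 2 * Real.exp (-2*(d:ℝ)) +
      2 * Real.exp (-2*(d:ℝ)) + ((d:ℝ)/n d + 20000/d) / δ + gvar / d / δ)) atTop (nhds 0) := by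
    rw [← ENNReal.ofReal_zero]
    refine ENNReal.tendsto_ofReal ?_
    have := ((((ex.const_mul 2).add (ex.const_mul 2)).add (ex.const_mul 2)).add
      ((hdn.add (iv 20000)).div_const δ)).add ((iv gvar).div_const δ)
    simpa using this
  have hb : ∀ r : ℝ, 0 < r → ∀ᶠ d : ℕ in atTop, (d:ℝ)/n d ≤ r := fun r hr =>
    (hdn.eventually_lt_const hr).mono fun _ h => h.le
  refine tendsto_of_tendsto_of_tendsto_of_le_of_le' tendsto_const_nhds hlim
    (Eventually.of_forall fun _ => zero_le) ?_
  filter_upwards [eventually_gt_atTop 0, hn.eventually_gt_atTop 0, hb ((1/(2*163840000000))^2) (by positivity),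
    hb (1/(62*10^12)) (by positivity), hb (θ/2/(2*(1440*16000000^2)*163840000000^4)) (by positivity)]
    with d hd hnd h1 h2 h3
  have hd' : (0:ℝ) < d := by positivity
  have hn' : (0:ℝ) < n d := by positivity
  have hq : (0:ℝ) < (d:ℝ)/n d := by positivity
  have hs : Real.sqrt ((d:ℝ)/n d)^2 = (d:ℝ)/n d := Real.sq_sqrt hq.le
  refine (prob_main (hX d) hnd hd m (η := Real.sqrt ((d:ℝ)/n d)) (δ := δ) (ε := ε) (Real.sqrt_pos.2 hq) hδ0 hs ?_
    (T d) (hT d) ?_).trans ?_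
  · have := Real.sqrt_le_sqrt h1
    rw [Real.sqrt_sq (by positivity)] at this
    linarith
  · rw [hs, ← hL]
    rw [le_div_iff₀ (by positivity)] at h3
    have h4 : (2*(1440*16000000^2)+2) * δ = θ/2 := by rw [hδ]; field_simp
    have h5 : (2*(1440*16000000^2)+2) * δ + 2*(1440*16000000^2)*163840000000^4*((d:ℝ)/n d) ≤ (ε/L)^2 := by
      rw [← hθ, h4]; linarith
    calc L * _ ≤ L * Real.sqrt ((ε/L)^2) := by gcongr
      _ = ε := by rw [Real.sqrt_sq (by positivity)]; field_simp
  · refine ENNReal.ofReal_le_ofReal ?_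
    have : Real.exp (60*d - n d / 10^12) ≤ Real.exp (-2*(d:ℝ)) := by
      refine Real.exp_le_exp.2 ?_
      rw [div_le_div_iff₀ hn' (by norm_num)] at h2
      rw [sub_le_iff_le_add, ← sub_le_iff_le_add', le_div_iff₀ (by norm_num)]
      linarith
    linarith

end

/-- **Equation (6) of the paper:** for an i.i.d. standard normal sample `N_d(0, I)` with
`n(d) → ∞` and `d/n(d) → 0`, and `T*_d = √(n(d)/d)·(T_d − I)`,
`S*_d = √(n(d)/d)·(S_d − I)`, for every fixed integer `m ≥ 1` the difference of the
normalized traces `|(1/d)·tr((T*_d)^m) − (1/d)·tr((S*_d)^m)|` converges in probability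
to `0` as `d → ∞`. -/
theorem trace_pow_tylerStar_sub_covStar_tendsto_zero
    {Ωs : Type*} [MeasurableSpace Ωs] (P : Measure Ωs) [IsProbabilityMeasure P]
    (n : ℕ → ℕ) (hn : Tendsto n atTop atTop)
    (hdn : Tendsto (fun d : ℕ => (d : ℝ) / (n d : ℝ)) atTop (nhds 0))
    (X : ∀ d : ℕ, Fin (n d) → Ωs → Fin d → ℝ)
    (hmeas : ∀ d j, Measurable (X d j))
    (hindep : ∀ d, iIndepFun (X d) P)
    (hgauss : ∀ d j,
      Measure.map (X d j) P = Measure.pi fun _ : Fin d => gaussianReal 0 1)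
    (T : ∀ d : ℕ, Ωs → Matrix (Fin d) (Fin d) ℝ)
    (hT : ∀ d, ∀ᵐ ω ∂P, IsTyler (fun j => X d j ω) (T d ω))
    (m : ℕ) (hm : 1 ≤ m) :
    ∀ ε > (0 : ℝ),
      Tendsto (fun d : ℕ =>
          P {ω | |(1 / (d : ℝ)) * ((Real.sqrt ((n d : ℝ) / d) • (T d ω - 1)) ^ m).trace -
                 (1 / (d : ℝ)) * ((Real.sqrt ((n d : ℝ) / d) •
                   ((n d : ℝ)⁻¹ • ∑ j : Fin (n d),
                     vecMulVec (X d j ω) (X d j ω) - 1)) ^ m).trace| > ε})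
        atTop (nhds 0) := by
  intro ε hε
  exact final_main P n hn hdn X (fun d => ⟨hmeas d, hindep d, hgauss d⟩) T hT m hm ε hε
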